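/- arXiv:1301.5633 — 4 statements merged into one kernel-verified Lean document; each statement's English description precedes it below -/
import Mathlib

section
/- Let a, b ∈ 𝒮(ℝ^{2n}) and define c ∈ 𝒮(ℝ^{2n}) by c(x,ξ) = b(x, ξ', 0) · a(x,ξ). Then there exists C > 0 such that for all h ∈ (0,1] and all u ∈ 𝒮(ℝⁿ), ‖(Op_h(b) ∘ Op_h^Λ(a))u − Op_h^Λ(c)u‖_{L²(ℝⁿ)} ≤ C h^{1/2} ‖u‖_{L²(ℝⁿ)}. -/
open MeasureTheory
open scoped RealInnerProductSpace

/-- Points of `ℝⁿ` (with `n = m + 1 ≥ 1`) are written `(x', xₙ)` with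
`x' ∈ ℝ^{n-1} = EuclideanSpace ℝ (Fin m)` and `xₙ ∈ ℝ`. -/
abbrev V (m : ℕ) : Type := EuclideanSpace ℝ (Fin m) × ℝ

/-- The quantization `Op_h^Λ(a)u(x) = (2πh)^{-n} ∫ e^{(i/h)(x'·ξ' - y·ξ)} a(x,ξ) u(y) dy dξ`. -/
noncomputable def OpL (m : ℕ) (h : ℝ) (a : V m × V m → ℂ) (u : V m → ℂ) (x : V m) : ℂ :=
  ((2 * Real.pi * h) ^ (m + 1))⁻¹ •
    ∫ p : V m × V m,
      Complex.exp (Complex.I *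
        Complex.ofReal ((⟪x.1, p.2.1⟫ - (⟪p.1.1, p.2.1⟫ + p.1.2 * p.2.2)) / h)) *
      a (x, p.2) * u p.1

/-- The standard quantization `Op_h(b)u(x) = (2πh)^{-n} ∫ e^{(i/h)(x−y)·ξ} b(x,ξ) u(y) dy dξ`. -/
noncomputable def OpS (m : ℕ) (h : ℝ) (b : V m × V m → ℂ) (u : V m → ℂ) (x : V m) : ℂ :=
  ((2 * Real.pi * h) ^ (m + 1))⁻¹ •
    ∫ p : V m × V m,
      Complex.exp (Complex.I *
        Complex.ofReal ((⟪x.1 - p.1.1, p.2.1⟫ + (x.2 - p.1.2) * p.2.2) / h)) *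
      b (x, p.2) * u p.1

/-!
Write `H = 2πh` and let `A_x`, `B_x` be the inverse Fourier transforms of `a (x, ·)`, `b (x, ·)`.
Then `Op_h(b) w(x) = ∫ B_x(z) w(x - Hz) dz`, and `Op_h^Λ(a)` has the integral kernel
`H⁻ⁿ A_x((x' - y') / H, -yₙ / H)`. In the argument of `A`, replacing `x` by `x - Hz` only shifts the
first component by `-z'`. If the index `x` of `A` stayed the same, averaging these shifts against
`B_x` would just multiply the symbol `a (x, ξ)` by `b (x, ξ', 0)`, which produces `Op_h^Λ(c)`.
Moving the index to `x - Hz` costs a factor `O(H |z|)`. As the kernel does not couple `xₙ` with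
`yₙ`, Young's inequality in `x'` and the Cauchy–Schwarz inequality in `xₙ` and in `yₙ / H` bound
the operator norm of the difference by `O(H · H⁻ⁿ · Hⁿ⁻¹ · H^{1/2}) = O(H^{1/2})`.
-/

namespace Semiclassical

open Asymptotics Filter Module
open scoped SchwartzMap FourierTransform ENNReal

lemma one_add_norm_add_le_mul {X : Type*} [SeminormedAddGroup X] (x y : X) :
    1 + ‖x + y‖ ≤ (1 + ‖x‖) * (1 + ‖y‖) := by
  nlinarith [norm_add_le x y, norm_nonneg x, norm_nonneg y]

lemma integrable_inv_one_add_norm_pow {X : Type*} [NormedAddCommGroup X] [NormedSpace ℝ X]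
    [FiniteDimensional ℝ X] [MeasurableSpace X] [BorelSpace X] {μ : Measure X} [μ.IsAddHaarMeasure]
    {k : ℕ} (hk : finrank ℝ X < k) : Integrable (fun x => ((1 + ‖x‖) ^ k)⁻¹) μ := by
  refine (integrable_one_add_norm (r := k) (by exact_mod_cast hk)).congr
    (Eventually.of_forall fun x => ?_)
  simp only [Real.rpow_neg (add_nonneg zero_le_one (norm_nonneg x)), Real.rpow_natCast]

section WithSeminorms

variable {𝕜 X Y ι κ α : Type*} [NontriviallyNormedField 𝕜] [AddCommGroup X] [Module 𝕜 X]
  [AddCommGroup Y] [Module 𝕜 Y] {p : SeminormFamily 𝕜 X ι} {q : SeminormFamily 𝕜 Y κ}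
  {l : Filter α} {f : α → X} {w : α → ℝ}

lemma isBigO_finsetSup_seminorm (hf : ∀ i, (fun t => p i (f t)) =O[l] w) (s : Finset ι) :
    (fun t => s.sup p (f t)) =O[l] w := by
  refine IsBigO.trans (isBigO_of_le l fun t => ?_) (IsBigO.sum fun i (_ : i ∈ s) => hf i)
  rw [Real.norm_of_nonneg (apply_nonneg _ _), Finset.sum_apply]
  calc s.sup p (f t) ≤ (∑ i ∈ s, p i) (f t) := Seminorm.finset_sup_le_sum p s (f t)
    _ = ∑ i ∈ s, p i (f t) := by simp
    _ ≤ ‖∑ i ∈ s, p i (f t)‖ := Real.le_norm_self _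

lemma isBigO_seminorm_map [TopologicalSpace X] [TopologicalSpace Y] (hp : WithSeminorms p)
    (hq : WithSeminorms q) (T : X →L[𝕜] Y) (hf : ∀ i, (fun t => p i (f t)) =O[l] w) (j : κ) :
    (fun t => q j (T (f t))) =O[l] w := by
  obtain ⟨s, C, -, hC⟩ := Seminorm.bound_of_continuous hp ((q j).comp T.toLinearMap)
    ((hq.continuous_seminorm j).comp T.continuous)
  refine IsBigO.trans (IsBigO.of_bound C (Eventually.of_forall fun t => ?_))
    (isBigO_finsetSup_seminorm hf s)
  rw [Real.norm_of_nonneg (apply_nonneg _ _), Real.norm_of_nonneg (apply_nonneg _ _)]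
  exact hC (f t)

end WithSeminorms

section Schwartz

variable {α D E G : Type*} [NormedAddCommGroup D] [NormedSpace ℝ D] [NormedAddCommGroup E]
  [NormedSpace ℝ E] [NormedAddCommGroup G] [NormedSpace ℝ G]

lemma exists_one_add_norm_pow_mul_norm_le_of_isBigO_seminorm {𝕜 : Type*}
    [NontriviallyNormedField 𝕜] [NormedSpace 𝕜 G] [SMulCommClass ℝ 𝕜 G] {f : α → 𝓢(E, G)}
    {w : α → ℝ} (hw : ∀ t, 0 ≤ w t)
    (hf : ∀ i, (fun t => schwartzSeminormFamily 𝕜 E G i (f t)) =O[⊤] w) (k : ℕ) :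
    ∃ C, 0 ≤ C ∧ ∀ t x, (1 + ‖x‖) ^ k * ‖f t x‖ ≤ C * w t := by
  obtain ⟨C, hC, hbound⟩ :=
    (isBigO_finsetSup_seminorm hf (Finset.Iic (k, 0))).exists_nonneg
  refine ⟨2 ^ k * C, by positivity, fun t x => ?_⟩
  have hsup := isBigOWith_top.1 hbound t
  rw [Real.norm_of_nonneg (apply_nonneg _ _), Real.norm_of_nonneg (hw t)] at hsup
  calc (1 + ‖x‖) ^ k * ‖f t x‖
      ≤ 2 ^ k * (Finset.Iic (k, 0)).sup (schwartzSeminormFamily 𝕜 E G) (f t) := by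
        rw [← norm_iteratedFDeriv_zero (𝕜 := ℝ)]
        exact SchwartzMap.one_add_le_sup_seminorm_apply (m := (k, 0)) le_rfl le_rfl (f t) x
    _ ≤ 2 ^ k * (C * w t) := by gcongr
    _ = 2 ^ k * C * w t := by ring

/-- The restriction `ξ ↦ f (x, ξ)` of a Schwartz function on a product to a vertical slice. -/
noncomputable def slice (f : 𝓢(D × E, G)) (x : D) : 𝓢(E, G) :=
  SchwartzMap.compCLMOfAntilipschitz ℝ (K := 1) (g := fun ξ => (x, ξ))
    (by
      have h := (Function.HasTemperateGrowth.const (E := E) (x, (0 : E))).add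
        (ContinuousLinearMap.inr ℝ D E).hasTemperateGrowth
      convert h using 1
      ext ξ <;> simp)
    (fun ξ η => by simp [Prod.edist_eq]) f

@[simp]
lemma slice_apply (f : 𝓢(D × E, G)) (x : D) (ξ : E) : slice f x ξ = f (x, ξ) := rfl

lemma iteratedFDeriv_slice (f : 𝓢(D × E, G)) (l : ℕ) (x : D) (ξ : E) :
    iteratedFDeriv ℝ l (slice f x) ξ =
      (iteratedFDeriv ℝ l f (x, ξ)).compContinuousLinearMap
        fun _ => ContinuousLinearMap.inr ℝ D E := by
  have hslice : (slice f x : E → G) =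
      (fun p => f (p + (x, 0))) ∘ ContinuousLinearMap.inr ℝ D E := by
    ext ξ
    simp
  have hsmooth : ContDiff ℝ l fun p : D × E => f (p + (x, 0)) :=
    (f.smooth l).comp (contDiff_id.add contDiff_const)
  rw [hslice, ContinuousLinearMap.iteratedFDeriv_comp_right _ hsmooth _ le_rfl,
    iteratedFDeriv_comp_add_right]
  simp

lemma norm_compContinuousLinearMap_inr_le {l : ℕ} (M : (D × E) [×l]→L[ℝ] G) :
    ‖M.compContinuousLinearMap fun _ => ContinuousLinearMap.inr ℝ D E‖ ≤ ‖M‖ :=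
  (M.norm_compContinuousLinearMap_le _).trans <| mul_le_of_le_one_right (norm_nonneg _) <|
    Finset.prod_le_one (fun _ _ => norm_nonneg _) fun _ _ =>
      ContinuousLinearMap.norm_inr_le_one ℝ D E

lemma exists_norm_iteratedFDeriv_prod_le (f : 𝓢(D × E, G)) (j k l : ℕ) :
    ∃ C, 0 ≤ C ∧ ∀ (x : D) (ξ : E),
      ‖iteratedFDeriv ℝ l f (x, ξ)‖ ≤ C / ((1 + ‖x‖) ^ j * (1 + ‖ξ‖) ^ k) := by
  refine ⟨2 ^ (j + k) * (Finset.Iic (j + k, l)).sup (schwartzSeminormFamily ℝ (D × E) G) f,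
    by positivity, fun x ξ => ?_⟩
  rw [le_div_iff₀ (by positivity), mul_comm]
  calc (1 + ‖x‖) ^ j * (1 + ‖ξ‖) ^ k * ‖iteratedFDeriv ℝ l f (x, ξ)‖
      ≤ (1 + ‖(x, ξ)‖) ^ j * (1 + ‖(x, ξ)‖) ^ k * ‖iteratedFDeriv ℝ l f (x, ξ)‖ := by
        gcongr
        · exact norm_fst_le (x, ξ)
        · exact norm_snd_le (x, ξ)
    _ = (1 + ‖(x, ξ)‖) ^ (j + k) * ‖iteratedFDeriv ℝ l f (x, ξ)‖ := by rw [pow_add]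
    _ ≤ _ := SchwartzMap.one_add_le_sup_seminorm_apply (𝕜 := ℝ) (m := (j + k, l))
        le_rfl le_rfl f _

lemma exists_norm_iteratedFDeriv_add_left_sub_le (f : 𝓢(D × E, G)) (k l : ℕ) :
    ∃ C, 0 ≤ C ∧ ∀ (x v : D) (ξ : E),
      ‖iteratedFDeriv ℝ l f (x + v, ξ) - iteratedFDeriv ℝ l f (x, ξ)‖ ≤
        C * (1 + ‖v‖) / ((1 + ‖x‖) * (1 + ‖ξ‖) ^ k) * ‖v‖ := by
  obtain ⟨C, hC, hdecay⟩ := exists_norm_iteratedFDeriv_prod_le f 1 k (l + 1)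
  refine ⟨C, hC, fun x v ξ => ?_⟩
  have hderiv : ∀ p ∈ segment ℝ (x, ξ) (x + v, ξ), ‖fderiv ℝ (iteratedFDeriv ℝ l f) p‖ ≤
      C * (1 + ‖v‖) / ((1 + ‖x‖) * (1 + ‖ξ‖) ^ k) := by
    rw [segment_eq_image']
    rintro _ ⟨s, ⟨hs₀, hs₁⟩, rfl⟩
    have hx : 1 + ‖x‖ ≤ (1 + ‖x + s • v‖) * (1 + ‖v‖) :=
      calc 1 + ‖x‖ = 1 + ‖(x + s • v) + -(s • v)‖ := by rw [add_neg_cancel_right]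
        _ ≤ (1 + ‖x + s • v‖) * (1 + ‖-(s • v)‖) := one_add_norm_add_le_mul _ _
        _ ≤ (1 + ‖x + s • v‖) * (1 + ‖v‖) := by
          rw [norm_neg, norm_smul, Real.norm_of_nonneg hs₀]
          gcongr
          exact mul_le_of_le_one_left (norm_nonneg _) hs₁
    calc ‖fderiv ℝ (iteratedFDeriv ℝ l f) ((x, ξ) + s • ((x + v, ξ) - (x, ξ)))‖
        = ‖iteratedFDeriv ℝ (l + 1) f (x + s • v, ξ)‖ := by
          rw [norm_fderiv_iteratedFDeriv]; simp
      _ ≤ C / ((1 + ‖x + s • v‖) * (1 + ‖ξ‖) ^ k) := by simpa using hdecay (x + s • v) ξ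
      _ ≤ C * (1 + ‖v‖) / ((1 + ‖x‖) * (1 + ‖ξ‖) ^ k) := by
          rw [div_le_div_iff₀ (by positivity) (by positivity)]
          calc C * ((1 + ‖x‖) * (1 + ‖ξ‖) ^ k)
              ≤ C * ((1 + ‖x + s • v‖) * (1 + ‖v‖) * (1 + ‖ξ‖) ^ k) := by gcongr
            _ = _ := by ring
  simpa [Prod.norm_def] using
    (convex_segment (x, ξ) (x + v, ξ)).norm_image_sub_le_of_norm_fderiv_le
      (fun p _ => ((f.smooth (l + 1)).differentiable_iteratedFDeriv
        (by exact_mod_cast Nat.lt_succ_self l)) p)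
      hderiv (left_mem_segment _ _ _) (right_mem_segment _ _ _)

variable (𝕜 : Type*) [NontriviallyNormedField 𝕜] [NormedSpace 𝕜 G] [SMulCommClass ℝ 𝕜 G]

lemma isBigO_schwartzSeminormFamily_of_le {f : α → 𝓢(E, G)} {w : α → ℝ} (hw : ∀ t, 0 ≤ w t)
    {i : ℕ × ℕ} {C : ℝ} (hC : 0 ≤ C)
    (hf : ∀ t x, ‖iteratedFDeriv ℝ i.2 (f t) x‖ ≤ C * w t / (1 + ‖x‖) ^ i.1) :
    (fun t => schwartzSeminormFamily 𝕜 E G i (f t)) =O[⊤] w := by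
  refine IsBigO.of_bound C (Eventually.of_forall fun t => ?_)
  rw [Real.norm_of_nonneg (apply_nonneg _ _), Real.norm_of_nonneg (hw t)]
  refine SchwartzMap.seminorm_le_bound 𝕜 _ _ _ (mul_nonneg hC (hw t)) fun x => ?_
  calc ‖x‖ ^ i.1 * ‖iteratedFDeriv ℝ i.2 (f t) x‖
      ≤ (1 + ‖x‖) ^ i.1 * (C * w t / (1 + ‖x‖) ^ i.1) := by
        gcongr
        · exact le_add_of_nonneg_left zero_le_one
        · exact hf t x
    _ = C * w t := by field_simp

lemma isBigO_seminorm_slice (f : 𝓢(D × E, G)) (j : ℕ) (i : ℕ × ℕ) :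
    (fun x => schwartzSeminormFamily 𝕜 E G i (slice f x)) =O[⊤] fun x => ((1 + ‖x‖) ^ j)⁻¹ := by
  obtain ⟨C, hC, hdecay⟩ := exists_norm_iteratedFDeriv_prod_le f j i.1 i.2
  refine isBigO_schwartzSeminormFamily_of_le 𝕜 (fun _ => by positivity) hC fun x ξ => ?_
  rw [iteratedFDeriv_slice, ← div_eq_mul_inv, div_div]
  exact (norm_compContinuousLinearMap_inr_le _).trans (hdecay x ξ)

lemma isBigO_seminorm_slice_add_sub_slice (f : 𝓢(D × E, G)) (i : ℕ × ℕ) :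
    (fun p : D × D => schwartzSeminormFamily 𝕜 E G i (slice f (p.1 + p.2) - slice f p.1)) =O[⊤]
      fun p => ‖p.2‖ * (1 + ‖p.2‖) / (1 + ‖p.1‖) := by
  obtain ⟨C, hC, hdiff⟩ := exists_norm_iteratedFDeriv_add_left_sub_le f i.1 i.2
  refine isBigO_schwartzSeminormFamily_of_le 𝕜 (fun _ => by positivity) hC fun ⟨x, v⟩ ξ => ?_
  have hsub : iteratedFDeriv ℝ i.2 (slice f (x + v) - slice f x : 𝓢(E, G)) ξ =
      (iteratedFDeriv ℝ i.2 f (x + v, ξ) - iteratedFDeriv ℝ i.2 f (x, ξ)).compContinuousLinearMap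
        fun _ => ContinuousLinearMap.inr ℝ D E := by
    have hsmooth (y : D) : ContDiffAt ℝ i.2 (slice f y) ξ := ((slice f y).smooth i.2).contDiffAt
    rw [FunLike.coe_sub, iteratedFDeriv_sub_apply (hsmooth _) (hsmooth _), iteratedFDeriv_slice,
      iteratedFDeriv_slice]
    rfl
  rw [hsub]
  calc _ ≤ _ := (norm_compContinuousLinearMap_inr_le _).trans (hdiff x v ξ)
    _ = _ := by field_simp

end Schwartz

section ProdFourier

variable {E F : Type*} [NormedAddCommGroup E] [InnerProductSpace ℝ E] [NormedAddCommGroup F]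
  [InnerProductSpace ℝ F]

/-- The Euclidean inner product of `E × F`, a type which carries the supremum norm. -/
def prodInner (z ξ : E × F) : ℝ := ⟪z.1, ξ.1⟫ + ⟪z.2, ξ.2⟫

@[fun_prop]
lemma continuous_prodInner {α : Type*} [TopologicalSpace α] {f g : α → E × F} (hf : Continuous f)
    (hg : Continuous g) : Continuous fun t => prodInner (f t) (g t) := by
  unfold prodInner
  fun_prop

variable [FiniteDimensional ℝ E] [MeasurableSpace E] [BorelSpace E] [FiniteDimensional ℝ F]
  [MeasurableSpace F] [BorelSpace F]

/-- The inverse Fourier transform of Schwartz functions on `E × F`, for the inner product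
`prodInner` and the product Lebesgue measure. -/
noncomputable def prodFourierInv : 𝓢(E × F, ℂ) →L[ℂ] 𝓢(E × F, ℂ) :=
  SchwartzMap.compCLMOfContinuousLinearEquiv ℂ (WithLp.prodContinuousLinearEquiv 2 ℝ E F).symm ∘L
    FourierTransform.fourierInvCLM ℂ 𝓢(WithLp 2 (E × F), ℂ) ∘L
    SchwartzMap.compCLMOfContinuousLinearEquiv ℂ (WithLp.prodContinuousLinearEquiv 2 ℝ E F)

lemma integral_comp_ofLp {G : Type*} [NormedAddCommGroup G] [NormedSpace ℝ G] (g : E × F → G) :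
    ∫ v : WithLp 2 (E × F), g v.ofLp = ∫ ξ, g ξ :=
  MeasurePreserving.integral_comp' (f := (MeasurableEquiv.toLp 2 (E × F)).symm)
    (WithLp.volume_preserving_ofLp E F) g

lemma prodFourierInv_apply (f : 𝓢(E × F, ℂ)) (z : E × F) :
    prodFourierInv f z = ∫ ξ, 𝐞 (prodInner z ξ) • f ξ := by
  rw [← integral_comp_ofLp]
  simp [prodFourierInv, SchwartzMap.fourierInv_coe, Real.fourierInv_eq, prodInner,
    WithLp.prod_inner_apply, real_inner_comm]

lemma integral_fourierChar_neg_smul_prodFourierInv (f : 𝓢(E × F, ℂ)) (ξ : E × F) :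
    ∫ z, 𝐞 (-prodInner ξ z) • prodFourierInv f z = f ξ := by
  let e := WithLp.prodContinuousLinearEquiv 2 ℝ E F
  calc ∫ z, 𝐞 (-prodInner ξ z) • prodFourierInv f z
      = FourierTransform.fourier (FourierTransform.fourierInv
          (SchwartzMap.compCLMOfContinuousLinearEquiv ℂ e f)) (e.symm ξ) := by
        rw [← integral_comp_ofLp, SchwartzMap.fourier_coe, Real.fourier_eq]
        simp [e, prodFourierInv, prodInner, WithLp.prod_inner_apply, real_inner_comm]
    _ = f ξ := by simp

end ProdFourier

section PartialFourier

variable {D E F Y : Type*} [NormedAddCommGroup D] [NormedSpace ℝ D]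
  [NormedAddCommGroup E] [InnerProductSpace ℝ E] [FiniteDimensional ℝ E] [MeasurableSpace E]
  [BorelSpace E] [NormedAddCommGroup F] [InnerProductSpace ℝ F] [FiniteDimensional ℝ F]
  [MeasurableSpace F] [BorelSpace F] [MeasurableSpace Y]

instance isAddHaarMeasure_volume_prod : (volume : Measure (E × F)).IsAddHaarMeasure :=
  inferInstanceAs ((volume : Measure E).prod (volume : Measure F)).IsAddHaarMeasure

/-- The inverse Fourier transform `z ↦ ∫ e^{2πi z·ξ} a(x, ξ) dξ` of a symbol in its second variable,
which provides the integral kernels of the operators with symbol `a`. -/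
noncomputable def partialFourierInv (a : 𝓢(D × (E × F), ℂ)) (x : D) (z : E × F) : ℂ :=
  prodFourierInv (slice a x) z

lemma partialFourierInv_eq_integral (a : 𝓢(D × (E × F), ℂ)) (x : D) (z : E × F) :
    partialFourierInv a x z = ∫ ξ, 𝐞 (prodInner z ξ) • a (x, ξ) :=
  prodFourierInv_apply _ _

lemma integral_fourierChar_neg_smul_partialFourierInv (a : 𝓢(D × (E × F), ℂ)) (x : D)
    (ξ : E × F) : ∫ z, 𝐞 (-prodInner ξ z) • partialFourierInv a x z = a (x, ξ) :=
  integral_fourierChar_neg_smul_prodFourierInv _ _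

lemma integrable_partialFourierInv (a : 𝓢(D × (E × F), ℂ)) (x : D) :
    Integrable (partialFourierInv a x) :=
  (prodFourierInv (slice a x)).integrable

lemma stronglyMeasurable_partialFourierInv [MeasurableSpace D] [OpensMeasurableSpace D]
    (a : 𝓢(D × (E × F), ℂ)) :
    StronglyMeasurable fun p : D × (E × F) => partialFourierInv a p.1 p.2 := by
  have hcont : Continuous fun q : (D × (E × F)) × (E × F) =>
      𝐞 (prodInner q.1.2 q.2) • a (q.1.1, q.2) :=
    (Real.continuous_fourierChar.comp (by fun_prop)).smul (a.continuous.comp (by fun_prop))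
  simpa only [partialFourierInv_eq_integral] using
    hcont.stronglyMeasurable.integral_prod_right' (ν := (volume : Measure (E × F)))

lemma exists_norm_partialFourierInv_le (a : 𝓢(D × (E × F), ℂ)) (j k : ℕ) :
    ∃ C, 0 ≤ C ∧ ∀ x z, ‖partialFourierInv a x z‖ ≤ C * ((1 + ‖x‖) ^ j)⁻¹ / (1 + ‖z‖) ^ k := by
  obtain ⟨C, hC, hbound⟩ := exists_one_add_norm_pow_mul_norm_le_of_isBigO_seminorm
    (fun x : D => by positivity)
    (isBigO_seminorm_map (schwartz_withSeminorms ℂ (E × F) ℂ) (schwartz_withSeminorms ℂ (E × F) ℂ)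
      prodFourierInv (isBigO_seminorm_slice ℂ a j)) k
  exact ⟨C, hC, fun x z => (le_div_iff₀' (by positivity)).2 (hbound x z)⟩

lemma exists_norm_partialFourierInv_add_sub_le (a : 𝓢(D × (E × F), ℂ)) (k : ℕ) :
    ∃ C, 0 ≤ C ∧ ∀ x v z, ‖partialFourierInv a (x + v) z - partialFourierInv a x z‖ ≤
      C * (‖v‖ * (1 + ‖v‖) / (1 + ‖x‖)) / (1 + ‖z‖) ^ k := by
  obtain ⟨C, hC, hbound⟩ := exists_one_add_norm_pow_mul_norm_le_of_isBigO_seminorm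
    (fun p : D × D => by positivity)
    (isBigO_seminorm_map (schwartz_withSeminorms ℂ (E × F) ℂ) (schwartz_withSeminorms ℂ (E × F) ℂ)
      prodFourierInv (isBigO_seminorm_slice_add_sub_slice ℂ a)) k
  refine ⟨C, hC, fun x v z => (le_div_iff₀' (by positivity)).2 ?_⟩
  simpa [partialFourierInv] using hbound (x, v) z

lemma integrable_partialFourierInv_mul [MeasurableSpace D] [OpensMeasurableSpace D]
    (a : 𝓢(D × (E × F), ℂ)) {μ : Measure Y} {ψ : Y → D} {φ : Y → E × F} {g : Y → ℂ}
    (hψ : Measurable ψ) (hφ : Measurable φ) (hg : Integrable g μ) :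
    Integrable (fun y => partialFourierInv a (ψ y) (φ y) * g y) μ := by
  obtain ⟨C, -, hC⟩ := exists_norm_partialFourierInv_le a 0 0
  exact hg.bdd_mul ((stronglyMeasurable_partialFourierInv a).comp_measurable
    (hψ.prodMk hφ)).aestronglyMeasurable (Eventually.of_forall fun y => by simpa using hC _ _)

variable {μ : Measure Y} {φ : Y → E × F} {u : Y → ℂ}

lemma integrable_fourierChar_prodInner_smul (a : 𝓢(D × (E × F), ℂ)) (x : D) (hφ : Measurable φ)
    (hu : Integrable u μ) :
    Integrable (fun p : Y × (E × F) => 𝐞 (prodInner (φ p.1) p.2) • (u p.1 * a (x, p.2)))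
      (μ.prod volume) := by
  have hprodInner : Continuous fun q : (E × F) × (E × F) => (𝐞 (prodInner q.1 q.2) : ℂ) :=
    continuous_induced_dom.comp (Real.continuous_fourierChar.comp (by fun_prop))
  have hchar : Measurable fun p : Y × (E × F) => (𝐞 (prodInner (φ p.1) p.2) : ℂ) :=
    hprodInner.measurable.comp ((hφ.comp measurable_fst).prodMk measurable_snd)
  exact (hu.mul_prod (slice a x).integrable).bdd_mul hchar.aestronglyMeasurable
    (Eventually.of_forall fun p => (Circle.norm_coe _).le)

lemma integral_fourierChar_prodInner_smul [SFinite μ] (a : 𝓢(D × (E × F), ℂ)) (x : D)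
    (hφ : Measurable φ) (hu : Integrable u μ) :
    ∫ p : Y × (E × F), 𝐞 (prodInner (φ p.1) p.2) • (u p.1 * a (x, p.2)) ∂μ.prod volume =
      ∫ y, partialFourierInv a x (φ y) * u y ∂μ := by
  rw [integral_prod _ (integrable_fourierChar_prodInner_smul a x hφ hu)]
  congr with y
  rw [partialFourierInv_eq_integral, ← integral_mul_const]
  congr with ξ
  rw [smul_mul_assoc, mul_comm]

lemma partialFourierInv_eq_integral_mul {a b c : 𝓢(D × (E × F), ℂ)}
    (hc : ∀ x ξ, c (x, ξ) = b (x, (ξ.1, 0)) * a (x, ξ)) (x : D) (w : E × F) :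
    partialFourierInv c x w =
      ∫ z, partialFourierInv b x z * partialFourierInv a x (w - (z.1, 0)) := by
  let φ (z : E × F) : E × F := w - (z.1, 0)
  have hφ : Measurable φ := by fun_prop
  have hchar (z ξ : E × F) : 𝐞 (prodInner (w - (z.1, 0)) ξ) =
      𝐞 (prodInner w ξ) * 𝐞 (-prodInner (ξ.1, 0) z) := by
    rw [← AddChar.map_add_eq_mul]
    congr 1
    simp only [prodInner, Prod.fst_sub, Prod.snd_sub, inner_sub_left, sub_zero, inner_zero_left,
      real_inner_comm z.1]
    ring
  calc partialFourierInv c x w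
      = ∫ ξ, ∫ z, 𝐞 (prodInner (w - (z.1, 0)) ξ) • (partialFourierInv b x z * a (x, ξ)) := by
        rw [partialFourierInv_eq_integral]
        congr with ξ
        rw [hc, ← integral_fourierChar_neg_smul_partialFourierInv b x (ξ.1, 0),
          ← integral_mul_const, Circle.smul_def, ← integral_smul]
        congr with z
        rw [hchar, mul_smul, smul_mul_assoc, Circle.smul_def (𝐞 (prodInner w ξ))]
    _ = ∫ p : (E × F) × (E × F),
          𝐞 (prodInner (w - (p.1.1, 0)) p.2) • (partialFourierInv b x p.1 * a (x, p.2))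
            ∂volume.prod volume :=
        (integral_prod_symm _ (integrable_fourierChar_prodInner_smul a x hφ
          (integrable_partialFourierInv b x))).symm
    _ = ∫ z, partialFourierInv a x (w - (z.1, 0)) * partialFourierInv b x z :=
        integral_fourierChar_prodInner_smul (φ := φ) a x hφ (integrable_partialFourierInv b x)
    _ = ∫ z, partialFourierInv b x z * partialFourierInv a x (w - (z.1, 0)) := by
        simp only [mul_comm]

end PartialFourier

section KernelArg

variable {E F : Type*} [NormedAddCommGroup E] [NormedSpace ℝ E] [NormedAddCommGroup F]
  [NormedSpace ℝ F]

/-- The argument `((x' - y') / H, -yₙ / H)` at which the partial Fourier transform of the symbol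
enters the integral kernel of `Op_h^Λ`, where `H = 2πh`; the phase of `Op_h^Λ` does not involve
`xₙ`. -/
noncomputable def kernelArg (H : ℝ) (x y : E × F) : E × F := (H⁻¹ • (x.1 - y.1), -(H⁻¹ • y.2))

@[fun_prop]
lemma continuous_kernelArg (H : ℝ) : Continuous fun p : (E × F) × (E × F) =>
    kernelArg H p.1 p.2 := by
  unfold kernelArg
  fun_prop

lemma kernelArg_sub_smul {H : ℝ} (hH : H ≠ 0) (x y z : E × F) :
    kernelArg H (x - H • z) y = kernelArg H x y - (z.1, 0) := by
  simp [kernelArg, sub_right_comm x.1, smul_sub _ (x.1 - y.1), inv_smul_smul₀ hH]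

end KernelArg

section Kernel

variable {E F : Type*} [NormedAddCommGroup E] [InnerProductSpace ℝ E] [FiniteDimensional ℝ E]
  [MeasurableSpace E] [BorelSpace E] [NormedAddCommGroup F] [InnerProductSpace ℝ F]
  [FiniteDimensional ℝ F] [MeasurableSpace F] [BorelSpace F]

/-- The integral kernel of `Op_h(b) ∘ Op_h^Λ(a) - Op_h^Λ(c)` up to the factor `H⁻ⁿ`, as a function
of `x` and `w = kernelArg H x y`. -/
noncomputable def remainderKernel (a b : 𝓢((E × F) × (E × F), ℂ)) (H : ℝ) (x w : E × F) : ℂ :=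
  ∫ z, partialFourierInv b x z *
    (partialFourierInv a (x - H • z) (w - (z.1, 0)) - partialFourierInv a x (w - (z.1, 0)))

lemma integrable_integral_partialFourierInv_kernelArg (a : 𝓢((E × F) × (E × F), ℂ)) (H : ℝ)
    {u : E × F → ℂ} (hu : Integrable u) :
    Integrable fun x => ∫ y, partialFourierInv a x (kernelArg H x y) * u y := by
  let k := finrank ℝ (E × F) + 1
  obtain ⟨C, -, hC⟩ := exists_norm_partialFourierInv_le a k 0
  have hweight : Integrable fun x : E × F => ((1 + ‖x‖) ^ k)⁻¹ :=
    integrable_inv_one_add_norm_pow (Nat.lt_succ_self _)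
  refine Integrable.integral_prod_left (μ := volume) (ν := volume)
    (f := fun p : (E × F) × (E × F) => partialFourierInv a p.1 (kernelArg H p.1 p.2) * u p.2) ?_
  refine ((hweight.const_mul C).mul_prod hu.norm).mono' ?_ (Eventually.of_forall fun p => ?_)
  · exact ((stronglyMeasurable_partialFourierInv a).comp_measurable
      (measurable_fst.prodMk (continuous_kernelArg H).measurable)).aestronglyMeasurable.mul
        hu.aestronglyMeasurable.comp_snd
  · rw [norm_mul]
    gcongr
    simpa using hC p.1 (kernelArg H p.1 p.2)

lemma integrable_partialFourierInv_mul_partialFourierInv_mul (a b : 𝓢((E × F) × (E × F), ℂ))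
    (H : ℝ) {u : E × F → ℂ} (hu : Integrable u) (x : E × F) :
    Integrable (fun p : (E × F) × (E × F) => partialFourierInv b x p.1 *
      (partialFourierInv a (x - H • p.1) (kernelArg H x p.2 - (p.1.1, 0)) * u p.2))
      (volume.prod volume) :=
  (integrable_partialFourierInv_mul a (ψ := fun p : (E × F) × (E × F) => x - H • p.1)
    (φ := fun p => kernelArg H x p.2 - (p.1.1, 0)) (by fun_prop) (by fun_prop)
    ((integrable_partialFourierInv b x).mul_prod hu)).congr
      (Eventually.of_forall fun _ => mul_left_comm _ _ _)

lemma integral_partialFourierInv_mul_integral_eq (a b : 𝓢((E × F) × (E × F), ℂ)) {H : ℝ}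
    (hH : H ≠ 0) {u : E × F → ℂ} (hu : Integrable u) (x : E × F) :
    ∫ z, partialFourierInv b x z *
        ∫ y, partialFourierInv a (x - H • z) (kernelArg H (x - H • z) y) * u y =
      ∫ y, (∫ z, partialFourierInv b x z *
        partialFourierInv a (x - H • z) (kernelArg H x y - (z.1, 0))) * u y := by
  simp only [kernelArg_sub_smul hH, ← integral_const_mul]
  rw [integral_integral_swap (integrable_partialFourierInv_mul_partialFourierInv_mul a b H hu x)]
  simp only [← mul_assoc, integral_mul_const]

lemma integral_partialFourierInv_mul_integral_sub_eq {a b c : 𝓢((E × F) × (E × F), ℂ)}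
    (hc : ∀ x ξ, c (x, ξ) = b (x, (ξ.1, 0)) * a (x, ξ)) {H : ℝ} (hH : H ≠ 0) {u : E × F → ℂ}
    (hu : Integrable u) (x : E × F) :
    (∫ z, partialFourierInv b x z *
        ∫ y, partialFourierInv a (x - H • z) (kernelArg H (x - H • z) y) * u y) -
      ∫ y, partialFourierInv c x (kernelArg H x y) * u y =
    ∫ y, remainderKernel a b H x (kernelArg H x y) * u y := by
  have hintg {ψ : E × F → E × F} (hψ : Measurable ψ) (w : E × F) :
      Integrable fun z => partialFourierInv b x z * partialFourierInv a (ψ z) (w - (z.1, 0)) := by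
    simpa only [mul_comm] using integrable_partialFourierInv_mul a hψ
      (φ := fun z => w - (z.1, 0)) (by fun_prop) (integrable_partialFourierInv b x)
  rw [integral_partialFourierInv_mul_integral_eq a b hH hu, ← integral_sub]
  · congr with y
    rw [partialFourierInv_eq_integral_mul hc, ← sub_mul, ← integral_sub (hintg (by fun_prop) _)
      (hintg measurable_const _)]
    simp only [remainderKernel, mul_sub]
  · simpa only [← mul_assoc, integral_mul_const] using
      (integrable_partialFourierInv_mul_partialFourierInv_mul a b H hu x).integral_prod_right
  · exact integrable_partialFourierInv_mul c measurable_const (by fun_prop) hu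

end Kernel

section RemainderBound

variable {E F : Type*} [NormedAddCommGroup E] [InnerProductSpace ℝ E] [FiniteDimensional ℝ E]
  [MeasurableSpace E] [BorelSpace E] [NormedAddCommGroup F] [InnerProductSpace ℝ F]
  [FiniteDimensional ℝ F] [MeasurableSpace F] [BorelSpace F]

lemma mul_one_add_mul_le {H H₀ r : ℝ} (hH : 0 ≤ H) (hH₀ : H ≤ H₀) (hr : 0 ≤ r) :
    H * r * (1 + H * r) ≤ (1 + H₀) * H * (1 + r) ^ 2 :=
  calc H * r * (1 + H * r) ≤ H * (1 + r) * ((1 + H₀) * (1 + r)) := by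
        gcongr
        · linarith
        · nlinarith [mul_le_mul_of_nonneg_right hH₀ hr, hH.trans hH₀]
    _ = (1 + H₀) * H * (1 + r) ^ 2 := by ring

lemma exists_norm_partialFourierInv_sub_smul_sub_le {X : Type*} [NormedAddCommGroup X]
    [NormedSpace ℝ X] (a : 𝓢(X × (E × F), ℂ)) (H₀ : ℝ) (k : ℕ) :
    ∃ C, 0 ≤ C ∧ ∀ H, 0 ≤ H → H ≤ H₀ → ∀ (x v : X) (w z : E × F),
      ‖partialFourierInv a (x - H • v) (w - z) - partialFourierInv a x (w - z)‖ ≤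
        C * H * (1 + ‖x‖)⁻¹ * ((1 + ‖w‖) ^ k)⁻¹ * ((1 + ‖v‖) ^ 2 * (1 + ‖z‖) ^ k) := by
  obtain ⟨C, hC, hdiff⟩ := exists_norm_partialFourierInv_add_sub_le a k
  refine ⟨C * (1 + |H₀|), by positivity, fun H hH hH₀ x v w z => ?_⟩
  have hv : ‖-(H • v)‖ = H * ‖v‖ := by rw [norm_neg, norm_smul, Real.norm_of_nonneg hH]
  have hw : (1 + ‖w‖) / (1 + ‖z‖) ≤ 1 + ‖w - z‖ := by
    simpa [div_le_iff₀ (add_pos_of_pos_of_nonneg one_pos (norm_nonneg z))] using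
      one_add_norm_add_le_mul (w - z) z
  calc ‖partialFourierInv a (x - H • v) (w - z) - partialFourierInv a x (w - z)‖
      ≤ C * (H * ‖v‖ * (1 + H * ‖v‖) / (1 + ‖x‖)) / (1 + ‖w - z‖) ^ k := by
        simpa only [hv, ← sub_eq_add_neg] using hdiff x (-(H • v)) (w - z)
    _ ≤ C * ((1 + |H₀|) * H * (1 + ‖v‖) ^ 2 / (1 + ‖x‖)) / ((1 + ‖w‖) / (1 + ‖z‖)) ^ k := by
        gcongr C * (?_ / _) / ?_ ^ k
        exact mul_one_add_mul_le hH (hH₀.trans (le_abs_self _)) (norm_nonneg _)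
    _ = _ := by
        rw [div_pow]
        field_simp

lemma exists_norm_remainderKernel_le (a b : 𝓢((E × F) × (E × F), ℂ)) (H₀ : ℝ) (k : ℕ) :
    ∃ C, 0 ≤ C ∧ ∀ H, 0 ≤ H → H ≤ H₀ → ∀ x w,
      ‖remainderKernel a b H x w‖ ≤ C * H * (1 + ‖x‖)⁻¹ * ((1 + ‖w‖) ^ k)⁻¹ := by
  let N := finrank ℝ (E × F) + 1
  obtain ⟨A, hA, ha⟩ := exists_norm_partialFourierInv_sub_smul_sub_le a H₀ k
  obtain ⟨B, hB, hb⟩ := exists_norm_partialFourierInv_le b 0 (2 + k + N)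
  have hweight : Integrable fun z : E × F => ((1 + ‖z‖) ^ N)⁻¹ :=
    integrable_inv_one_add_norm_pow (Nat.lt_succ_self _)
  refine ⟨A * B * ∫ z : E × F, ((1 + ‖z‖) ^ N)⁻¹, by positivity, fun H hH hH₀ x w => ?_⟩
  have hbound (z : E × F) : ‖partialFourierInv b x z * (partialFourierInv a (x - H • z)
      (w - (z.1, 0)) - partialFourierInv a x (w - (z.1, 0)))‖ ≤
      A * B * H * (1 + ‖x‖)⁻¹ * ((1 + ‖w‖) ^ k)⁻¹ * ((1 + ‖z‖) ^ N)⁻¹ := by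
    have hz : ‖((z.1, 0) : E × F)‖ ≤ ‖z‖ := by simp [Prod.norm_def]
    rw [norm_mul]
    calc _ ≤ B * ((1 + ‖x‖) ^ 0)⁻¹ / (1 + ‖z‖) ^ (2 + k + N) *
          (A * H * (1 + ‖x‖)⁻¹ * ((1 + ‖w‖) ^ k)⁻¹ * ((1 + ‖z‖) ^ 2 * (1 + ‖z‖) ^ k)) := by
          gcongr
          · exact hb x z
          · exact (ha H hH hH₀ x z w (z.1, 0)).trans (by gcongr)
      _ = _ := by
          rw [pow_add _ (2 + k), pow_add _ 2]
          field_simp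
  calc ‖remainderKernel a b H x w‖
      ≤ ∫ z : E × F, A * B * H * (1 + ‖x‖)⁻¹ * ((1 + ‖w‖) ^ k)⁻¹ * ((1 + ‖z‖) ^ N)⁻¹ :=
        norm_integral_le_of_norm_le (hweight.const_mul _) (Eventually.of_forall hbound)
    _ = _ := by
        rw [integral_const_mul]
        ring

end RemainderBound

section SchurTest

lemma sq_lintegral_mul_le {α : Type*} [MeasurableSpace α] {μ : Measure α} {f g : α → ℝ≥0∞}
    (hf : AEMeasurable f μ) (hg : AEMeasurable g μ) :
    (∫⁻ t, f t * g t ∂μ) ^ 2 ≤ (∫⁻ t, f t ^ 2 ∂μ) * ∫⁻ t, g t ^ 2 ∂μ := by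
  have hholder := ENNReal.lintegral_mul_le_Lp_mul_Lq μ Real.HolderConjugate.two_two hf hg
  have hsqrt (c : ℝ≥0∞) : (c ^ (1 / 2 : ℝ)) ^ 2 = c := by
    rw [← ENNReal.rpow_mul_natCast]
    norm_num
  simpa only [Pi.mul_apply, mul_pow, hsqrt, ENNReal.rpow_two] using pow_le_pow_left' hholder 2

lemma sq_lintegral_mul_mul_le {α : Type*} [MeasurableSpace α] {μ : Measure α} {w f g : α → ℝ≥0∞}
    (hw : AEMeasurable w μ) (hf : AEMeasurable f μ) (hg : AEMeasurable g μ) :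
    (∫⁻ t, w t * (f t * g t) ∂μ) ^ 2 ≤ (∫⁻ t, w t * f t ^ 2 ∂μ) * ∫⁻ t, w t * g t ^ 2 ∂μ := by
  have hdensity {F : α → ℝ≥0∞} (hF : AEMeasurable F μ) :
      ∫⁻ t, F t ∂μ.withDensity w = ∫⁻ t, w t * F t ∂μ :=
    lintegral_withDensity_eq_lintegral_mul₀ hw hF
  rw [← hdensity (F := fun t => f t * g t) (by fun_prop),
    ← hdensity (F := fun t => f t ^ 2) (by fun_prop),
    ← hdensity (F := fun t => g t ^ 2) (by fun_prop)]
  exact sq_lintegral_mul_le (hf.mono_ac (withDensity_absolutelyContinuous μ w))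
    (hg.mono_ac (withDensity_absolutelyContinuous μ w))

variable {X T : Type*} [AddGroup X] [MeasurableSpace X] [MeasurableAdd₂ X] [MeasurableNeg X]
  [MeasurableSpace T] {μ : Measure X} [SFinite μ] [μ.IsAddRightInvariant]
  {ν : Measure T} [SFinite ν]

lemma lintegral_lintegral_sub_mul {q : X → ℝ≥0∞} {g : X × T → ℝ≥0∞} (hq : Measurable q)
    (hg : AEMeasurable g (μ.prod ν)) :
    ∫⁻ s, ∫⁻ y, q (s - y.1) * g y ∂μ.prod ν ∂μ = (∫⁻ s, q s ∂μ) * ∫⁻ y, g y ∂μ.prod ν := by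
  rw [lintegral_lintegral_swap ((by fun_prop : Measurable fun p : X × (X × T) =>
    q (p.1 - p.2.1)).aemeasurable.mul hg.comp_snd), ← lintegral_const_mul'' _ hg]
  congr with y
  rw [lintegral_mul_const _ (by fun_prop), lintegral_sub_right_eq_self q]

variable [μ.IsAddLeftInvariant] [μ.IsNegInvariant]

lemma lintegral_sq_mul_lintegral_le {α β : T → ℝ≥0∞} {q : X → ℝ≥0∞} {g : X × T → ℝ≥0∞}
    (hα : Measurable α) (hβ : Measurable β) (hq : Measurable q) (hg : AEMeasurable g (μ.prod ν)) :
    ∫⁻ x, (α x.2 * ∫⁻ y, q (x.1 - y.1) * (β y.2 * g y) ∂μ.prod ν) ^ 2 ∂μ.prod ν ≤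
      (∫⁻ s, q s ∂μ) ^ 2 * (∫⁻ t, α t ^ 2 ∂ν) * (∫⁻ t, β t ^ 2 ∂ν) * ∫⁻ y, g y ^ 2 ∂μ.prod ν := by
  have hcauchySchwarz (x : X × T) : (∫⁻ y, q (x.1 - y.1) * (β y.2 * g y) ∂μ.prod ν) ^ 2 ≤
      (∫⁻ s, q s ∂μ) * (∫⁻ t, β t ^ 2 ∂ν) * ∫⁻ y, q (x.1 - y.1) * g y ^ 2 ∂μ.prod ν := by
    convert sq_lintegral_mul_mul_le (μ := μ.prod ν) (w := fun y => q (x.1 - y.1))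
      (f := fun y => β y.2) (by fun_prop) (by fun_prop) hg using 2
    rw [lintegral_prod_mul (f := fun s => q (x.1 - s)) (g := fun t => β t ^ 2) (by fun_prop)
      (by fun_prop), lintegral_sub_left_eq_self]
  have hinner : AEMeasurable (fun s => ∫⁻ y, q (s - y.1) * g y ^ 2 ∂μ.prod ν) μ :=
    ((by fun_prop : Measurable fun p : X × (X × T) => q (p.1 - p.2.1)).aemeasurable.mul
      (hg.comp_snd.pow_const 2)).lintegral_prod_right'
  have hprod : AEMeasurable (fun x => (∫⁻ y, q (x.1 - y.1) * g y ^ 2 ∂μ.prod ν) * α x.2 ^ 2)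
      (μ.prod ν) := hinner.comp_fst.mul (by fun_prop)
  calc ∫⁻ x, (α x.2 * ∫⁻ y, q (x.1 - y.1) * (β y.2 * g y) ∂μ.prod ν) ^ 2 ∂μ.prod ν
      ≤ ∫⁻ x, (∫⁻ s, q s ∂μ) * (∫⁻ t, β t ^ 2 ∂ν) *
          ((∫⁻ y, q (x.1 - y.1) * g y ^ 2 ∂μ.prod ν) * α x.2 ^ 2) ∂μ.prod ν := by
        refine lintegral_mono fun x => ?_
        rw [mul_pow, mul_comm (α x.2 ^ 2), ← mul_assoc]
        exact mul_le_mul_left (hcauchySchwarz x) _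
    _ = _ := by
        rw [lintegral_const_mul'' _ hprod,
          lintegral_prod_mul (g := fun t => α t ^ 2) hinner (by fun_prop),
          lintegral_lintegral_sub_mul hq (hg.pow_const 2)]
        ring

lemma eLpNorm_two_sq {α ε : Type*} [MeasurableSpace α] [ENorm ε] (f : α → ε) (μ : Measure α) :
    eLpNorm f 2 μ ^ 2 = ∫⁻ t, ‖f t‖ₑ ^ 2 ∂μ := by
  simpa using eLpNorm_nnreal_pow_eq_lintegral (f := f) (μ := μ) (p := 2) two_ne_zero

lemma eLpNorm_two_le_of_enorm_le_lintegral {α β : T → ℝ} {q : X → ℝ} {G G' : Type*}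
    [NormedAddCommGroup G] [NormedAddCommGroup G'] {f : X × T → G} {u : X × T → G'}
    (hα : Measurable α) (hβ : Measurable β) (hq : Measurable q)
    (hu : AEStronglyMeasurable u (μ.prod ν))
    (hf : ∀ x, ‖f x‖ₑ ≤ ‖α x.2‖ₑ * ∫⁻ y, ‖q (x.1 - y.1)‖ₑ * (‖β y.2‖ₑ * ‖u y‖ₑ) ∂μ.prod ν) :
    eLpNorm f 2 (μ.prod ν) ≤
      eLpNorm q 1 μ * eLpNorm α 2 ν * eLpNorm β 2 ν * eLpNorm u 2 (μ.prod ν) := by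
  rw [← ENNReal.pow_le_pow_left_iff two_ne_zero]
  simp only [mul_pow, eLpNorm_two_sq, eLpNorm_one_eq_lintegral_enorm]
  calc ∫⁻ x, ‖f x‖ₑ ^ 2 ∂μ.prod ν
      ≤ _ := lintegral_mono fun x => pow_le_pow_left' (hf x) 2
    _ ≤ _ := lintegral_sq_mul_lintegral_le (by fun_prop) (by fun_prop) (by fun_prop) hu.enorm

end SchurTest

section OperatorBound

lemma eLpNorm_comp_inv_smul {X G : Type*} [NormedAddCommGroup X] [NormedSpace ℝ X]
    [FiniteDimensional ℝ X] [MeasurableSpace X] [BorelSpace X] [NormedAddCommGroup G]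
    {μ : Measure X} [μ.IsAddHaarMeasure] {H : ℝ} (hH : 0 < H) (f : X → G) (p : ℝ≥0∞) :
    eLpNorm (fun x => f (H⁻¹ • x)) p μ =
      ENNReal.ofReal (H ^ finrank ℝ X) ^ (1 / p).toReal * eLpNorm f p μ := by
  calc eLpNorm (fun x => f (H⁻¹ • x)) p μ = eLpNorm f p (μ.map (H⁻¹ • ·)) :=
        ((Homeomorph.smulOfNeZero H⁻¹ (inv_ne_zero hH.ne')).measurableEmbedding
          |>.eLpNorm_map_measure).symm
    _ = ENNReal.ofReal (H ^ finrank ℝ X) ^ (1 / p).toReal * eLpNorm f p μ := by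
        rw [Measure.map_addHaar_smul μ (inv_ne_zero hH.ne'), inv_pow, inv_inv,
          abs_of_pos (pow_pos hH _), eLpNorm_smul_measure_of_ne_zero (by simp [hH]), smul_eq_mul]

lemma memLp_inv_one_add_norm_two : MemLp (fun t : ℝ => (1 + ‖t‖)⁻¹) 2 := by
  refine (memLp_two_iff_integrable_sq (by fun_prop)).2 ?_
  simpa only [inv_pow] using
    integrable_inv_one_add_norm_pow (X := ℝ) (μ := volume) (k := 2) (by simp)

variable {E : Type*} [NormedAddCommGroup E] [NormedSpace ℝ E]

lemma inv_one_add_norm_kernelArg_pow_le {F : Type*} [NormedAddCommGroup F] [NormedSpace ℝ F]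
    (H : ℝ) (x y : E × F) (k : ℕ) : ((1 + ‖kernelArg H x y‖) ^ (k + 1))⁻¹ ≤
      ((1 + ‖H⁻¹ • (x.1 - y.1)‖) ^ k)⁻¹ * (1 + ‖H⁻¹ • y.2‖)⁻¹ := by
  rw [← mul_inv, pow_succ]
  gcongr
  · exact norm_fst_le (kernelArg H x y)
  · exact (norm_neg _).ge.trans (norm_snd_le (kernelArg H x y))

variable [MeasurableSpace E]

lemma enorm_integral_kernelArg_le {B H : ℝ} {K : E × ℝ → E × ℝ → ℂ} {k : ℕ} {μ : Measure (E × ℝ)}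
    (hK : ∀ x w, ‖K x w‖ ≤ B * (1 + ‖x‖)⁻¹ * ((1 + ‖w‖) ^ (k + 1))⁻¹) (u : E × ℝ → ℂ) (x : E × ℝ) :
    ‖∫ y, K x (kernelArg H x y) * u y ∂μ‖ₑ ≤ ‖B * (1 + ‖x.2‖)⁻¹‖ₑ *
      ∫⁻ y, ‖((1 + ‖H⁻¹ • (x.1 - y.1)‖) ^ k)⁻¹‖ₑ * (‖(1 + ‖H⁻¹ • y.2‖)⁻¹‖ₑ * ‖u y‖ₑ) ∂μ := by
  have hB : 0 ≤ B := by simpa using (norm_nonneg _).trans (hK 0 0)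
  rw [← lintegral_const_mul' _ _ enorm_ne_top]
  refine (enorm_integral_le_lintegral_enorm _).trans (lintegral_mono fun y => ?_)
  rw [← enorm_norm (u y), ← enorm_mul, ← enorm_mul, ← enorm_mul, enorm_le_iff_norm_le,
    Real.norm_of_nonneg (by positivity), norm_mul]
  calc ‖K x (kernelArg H x y)‖ * ‖u y‖
      ≤ B * (1 + ‖x‖)⁻¹ * ((1 + ‖kernelArg H x y‖) ^ (k + 1))⁻¹ * ‖u y‖ := by
        gcongr
        exact hK _ _
    _ ≤ B * (1 + ‖x.2‖)⁻¹ * (((1 + ‖H⁻¹ • (x.1 - y.1)‖) ^ k)⁻¹ * (1 + ‖H⁻¹ • y.2‖)⁻¹) * ‖u y‖ := by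
        gcongr
        · exact norm_snd_le x
        · exact inv_one_add_norm_kernelArg_pow_le H x y k
    _ = _ := by ring

variable (E) [FiniteDimensional ℝ E] [BorelSpace E]

lemma exists_eLpNorm_integral_kernelArg_le (μ : Measure E) [μ.IsAddHaarMeasure] : ∃ M, 0 ≤ M ∧
    ∀ {B H : ℝ} {K : E × ℝ → E × ℝ → ℂ} {u : E × ℝ → ℂ}, 0 < H →
      (∀ x w, ‖K x w‖ ≤ B * (1 + ‖x‖)⁻¹ * ((1 + ‖w‖) ^ (finrank ℝ E + 2))⁻¹) →
      AEStronglyMeasurable u (μ.prod volume) →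
      eLpNorm (fun x => ∫ y, K x (kernelArg H x y) * u y ∂μ.prod volume) 2 (μ.prod volume) ≤
        ENNReal.ofReal (M * B * H ^ (finrank ℝ E + 1 / 2 : ℝ)) * eLpNorm u 2 (μ.prod volume) := by
  let d := finrank ℝ E
  let q (s : E) : ℝ := ((1 + ‖s‖) ^ (d + 1))⁻¹
  let r (t : ℝ) : ℝ := (1 + ‖t‖)⁻¹
  have hq : eLpNorm q 1 μ ≠ ∞ := (memLp_one_iff_integrable.2
    (integrable_inv_one_add_norm_pow (Nat.lt_succ_self _))).eLpNorm_ne_top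
  have hr : eLpNorm r 2 volume ≠ ∞ := memLp_inv_one_add_norm_two.eLpNorm_ne_top
  refine ⟨(eLpNorm q 1 μ * eLpNorm r 2 volume ^ 2).toReal, ENNReal.toReal_nonneg,
    fun {B H K u} hH hK hu => ?_⟩
  have hB : 0 ≤ B := by simpa using (norm_nonneg _).trans (hK 0 0)
  have hschur := eLpNorm_two_le_of_enorm_le_lintegral (μ := μ) (ν := volume)
    (α := fun t => B * r t) (β := fun t => r (H⁻¹ • t)) (q := fun s => q (H⁻¹ • s))
    (by fun_prop) (by fun_prop) (by fun_prop) hu (enorm_integral_kernelArg_le hK u)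
  have hα : eLpNorm (fun t => B * r t) 2 volume = ENNReal.ofReal B * eLpNorm r 2 volume := by
    rw [← Real.enorm_of_nonneg hB]
    exact eLpNorm_const_smul B r 2 volume
  have hpow : ENNReal.ofReal (H ^ d) * ENNReal.ofReal H ^ (1 / 2 : ℝ) =
      ENNReal.ofReal (H ^ (d + 1 / 2 : ℝ)) := by
    rw [ENNReal.ofReal_rpow_of_pos hH, ← ENNReal.ofReal_mul (by positivity), Real.rpow_add hH,
      Real.rpow_natCast]
  refine hschur.trans_eq ?_
  rw [hα, eLpNorm_comp_inv_smul hH q, eLpNorm_comp_inv_smul hH r, mul_assoc _ B,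
    ENNReal.ofReal_mul ENNReal.toReal_nonneg,
    ENNReal.ofReal_toReal (ENNReal.mul_ne_top hq (ENNReal.pow_ne_top hr)), ENNReal.ofReal_mul hB,
    ← hpow]
  simp only [div_one, ENNReal.toReal_one, ENNReal.rpow_one, finrank_self, pow_one, one_div,
    ENNReal.toReal_inv, ENNReal.toReal_ofNat]
  ring

end OperatorBound

section RemainderOperator

variable {E : Type*} [NormedAddCommGroup E] [InnerProductSpace ℝ E] [FiniteDimensional ℝ E]
  [MeasurableSpace E] [BorelSpace E]

lemma exists_eLpNorm_smul_integral_remainderKernel_le (a b : 𝓢((E × ℝ) × (E × ℝ), ℂ)) (H₀ : ℝ) :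
    ∃ C, 0 ≤ C ∧ ∀ H, 0 < H → H ≤ H₀ → ∀ u : E × ℝ → ℂ, AEStronglyMeasurable u →
      eLpNorm (fun x => (H ^ (finrank ℝ E + 1))⁻¹ •
        ∫ y, remainderKernel a b H x (kernelArg H x y) * u y) 2 volume ≤
          ENNReal.ofReal (C * H ^ (1 / 2 : ℝ)) * eLpNorm u 2 volume := by
  let d := finrank ℝ E
  obtain ⟨A, hA, hkernel⟩ := exists_norm_remainderKernel_le a b H₀ (d + 2)
  obtain ⟨M, hM, hop⟩ := exists_eLpNorm_integral_kernelArg_le E volume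
  refine ⟨M * A, by positivity, fun H hH hH₀ u hu => ?_⟩
  have hpow : (H ^ (d + 1))⁻¹ * (M * (A * H) * H ^ (d + 1 / 2 : ℝ)) =
      M * A * H ^ (1 / 2 : ℝ) := by
    rw [Real.rpow_add hH, Real.rpow_natCast]
    field_simp
    ring
  calc _ = ‖(H ^ (d + 1))⁻¹‖ₑ * eLpNorm (fun x =>
          ∫ y, remainderKernel a b H x (kernelArg H x y) * u y) 2 volume :=
        eLpNorm_const_smul _ _ _ _
    _ ≤ ‖(H ^ (d + 1))⁻¹‖ₑ * (ENNReal.ofReal (M * (A * H) * H ^ (d + 1 / 2 : ℝ)) *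
          eLpNorm u 2 volume) :=
        mul_le_mul_right (hop hH (hkernel H hH.le hH₀) hu) _
    _ = ENNReal.ofReal (M * A * H ^ (1 / 2 : ℝ)) * eLpNorm u 2 volume := by
        rw [Real.enorm_of_nonneg (by positivity), ← mul_assoc,
          ← ENNReal.ofReal_mul (by positivity), hpow]

end RemainderOperator

section Operators

variable {m : ℕ} {h : ℝ}

lemma fourierChar_eq_exp_of_two_pi_mul_eq {s t : ℝ} (hst : 2 * Real.pi * s = t) :
    (𝐞 s : ℂ) = Complex.exp (Complex.I * t) := by
  rw [Real.fourierChar_apply, hst, mul_comm]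

lemma OpL_eq_integral_partialFourierInv (hh : 0 < h) (a : 𝓢(V m × V m, ℂ)) {u : V m → ℂ}
    (hu : Integrable u) (x : V m) :
    OpL m h a u x = ((2 * Real.pi * h) ^ (m + 1))⁻¹ •
      ∫ y, partialFourierInv a x (kernelArg (2 * Real.pi * h) x y) * u y := by
  have hphase (p : V m × V m) : (𝐞 (prodInner (kernelArg (2 * Real.pi * h) x p.1) p.2) : ℂ) =
      Complex.exp (Complex.I * Complex.ofReal
        ((⟪x.1, p.2.1⟫ - (⟪p.1.1, p.2.1⟫ + p.1.2 * p.2.2)) / h)) := by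
    refine fourierChar_eq_exp_of_two_pi_mul_eq ?_
    simp only [prodInner, kernelArg, mul_inv_rev, smul_eq_mul, real_inner_smul_left, inner_sub_left,
      RCLike.inner_apply, Real.ringHom_apply, mul_neg]
    field_simp
    ring
  rw [OpL, ← integral_fourierChar_prodInner_smul (φ := kernelArg (2 * Real.pi * h) x) a x
    (by fun_prop) hu]
  congr 1
  refine integral_congr_ae (Eventually.of_forall fun p => ?_)
  simp only [Circle.smul_def, smul_eq_mul, hphase]
  ring

lemma OpS_eq_integral_partialFourierInv (hh : 0 < h) (b : 𝓢(V m × V m, ℂ)) {w : V m → ℂ}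
    (hw : Integrable w) (x : V m) :
    OpS m h b w x = ∫ z, partialFourierInv b x z * w (x - (2 * Real.pi * h) • z) := by
  have hH : 0 < 2 * Real.pi * h := by positivity
  have hphase (p : V m × V m) : (𝐞 (prodInner ((2 * Real.pi * h)⁻¹ • (x - p.1)) p.2) : ℂ) =
      Complex.exp (Complex.I * Complex.ofReal
        ((⟪x.1 - p.1.1, p.2.1⟫ + (x.2 - p.1.2) * p.2.2) / h)) := by
    refine fourierChar_eq_exp_of_two_pi_mul_eq ?_
    simp only [prodInner, mul_inv_rev, Prod.smul_fst, Prod.fst_sub, real_inner_smul_left,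
      inner_sub_left, Prod.smul_snd, Prod.snd_sub, smul_eq_mul, RCLike.inner_apply,
      Real.ringHom_apply]
    field_simp
  have hscale := Measure.integral_comp_smul (volume : Measure (V m))
    (fun t => partialFourierInv b x ((2 * Real.pi * h)⁻¹ • t) * w (x - t)) (2 * Real.pi * h)
  calc OpS m h b w x
      = ((2 * Real.pi * h) ^ (m + 1))⁻¹ •
          ∫ y, partialFourierInv b x ((2 * Real.pi * h)⁻¹ • (x - y)) * w y := by
        rw [OpS, ← integral_fourierChar_prodInner_smul
          (φ := fun y => (2 * Real.pi * h)⁻¹ • (x - y)) b x (by fun_prop) hw]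
        congr 1
        refine integral_congr_ae (Eventually.of_forall fun p => ?_)
        simp only [Circle.smul_def, smul_eq_mul, hphase]
        ring
    _ = ((2 * Real.pi * h) ^ (m + 1))⁻¹ •
          ∫ t, partialFourierInv b x ((2 * Real.pi * h)⁻¹ • t) * w (x - t) := by
        rw [← integral_sub_left_eq_self _ _ x]
        simp only [sub_sub_cancel]
    _ = ∫ z, partialFourierInv b x z * w (x - (2 * Real.pi * h) • z) := by
        simp only [inv_smul_smul₀ hH.ne'] at hscale
        simpa [abs_of_pos hH] using hscale.symm

lemma OpS_OpL_sub_OpL_eq_integral_remainderKernel {a b c : 𝓢(V m × V m, ℂ)}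
    (hc : ∀ x ξ : V m, c (x, ξ) = b (x, (ξ.1, 0)) * a (x, ξ)) (hh : 0 < h) {u : V m → ℂ}
    (hu : Integrable u) (x : V m) :
    OpS m h b (OpL m h a u) x - OpL m h c u x = ((2 * Real.pi * h) ^ (m + 1))⁻¹ •
      ∫ y, remainderKernel a b (2 * Real.pi * h) x (kernelArg (2 * Real.pi * h) x y) * u y := by
  have hOpL (a : 𝓢(V m × V m, ℂ)) : OpL m h a u = fun x => ((2 * Real.pi * h) ^ (m + 1))⁻¹ •
      ∫ y, partialFourierInv a x (kernelArg (2 * Real.pi * h) x y) * u y :=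
    funext (OpL_eq_integral_partialFourierInv hh a hu)
  have hintg : Integrable (OpL m h a u) := by
    rw [hOpL]
    exact (integrable_integral_partialFourierInv_kernelArg a _ hu).smul (_ : ℝ)
  rw [OpS_eq_integral_partialFourierInv hh b hintg, hOpL, hOpL,
    ← integral_partialFourierInv_mul_integral_sub_eq hc (by positivity) hu, smul_sub,
    ← integral_smul]
  simp only [mul_smul_comm]

end Operators

end Semiclassical

theorem stmt_7_general (m : ℕ) (a b c : SchwartzMap (V m × V m) ℂ)
    (hc : ∀ x ξ : V m, c (x, ξ) = b (x, (ξ.1, (0:ℝ))) * a (x, ξ)) :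
    ∃ C > 0, ∀ h : ℝ, 0 < h → h ≤ 1 → ∀ u : V m → ℂ, Integrable u →
      eLpNorm (fun x : V m => OpS m h b (OpL m h a u) x - OpL m h c u x) 2 volume ≤
        ENNReal.ofReal (C * h ^ ((1:ℝ)/2)) * eLpNorm u 2 volume := by
  obtain ⟨C, hC, hbound⟩ :=
    Semiclassical.exists_eLpNorm_smul_integral_remainderKernel_le a b (2 * Real.pi)
  refine ⟨C * (2 * Real.pi) ^ (1 / 2 : ℝ) + 1, by positivity, fun h hh hh₁ u hu => ?_⟩
  simp only [Semiclassical.OpS_OpL_sub_OpL_eq_integral_remainderKernel hc hh hu]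
  calc _ ≤ ENNReal.ofReal (C * (2 * Real.pi * h) ^ (1 / 2 : ℝ)) * eLpNorm u 2 volume := by
        simpa only [finrank_euclideanSpace_fin] using hbound (2 * Real.pi * h) (by positivity)
          (mul_le_of_le_one_right (by positivity) hh₁) u hu.aestronglyMeasurable
    _ ≤ _ := by
        rw [Real.mul_rpow (by positivity) hh.le, ← mul_assoc]
        gcongr
        linarith

/-- if `c(x,ξ) = b(x,ξ',0) a(x,ξ)` then
`‖(Op_h(b) ∘ Op_h^Λ(a))u − Op_h^Λ(c)u‖_{L²} ≤ C h^{1/2} ‖u‖_{L²}` for all `h ∈ (0,1]`. -/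
theorem stmt_7 (m : ℕ) (a b c : SchwartzMap (V m × V m) ℂ)
    (hc : ∀ x ξ : V m, c (x, ξ) = b (x, (ξ.1, (0:ℝ))) * a (x, ξ)) :
    ∃ C > 0, ∀ h : ℝ, 0 < h → h ≤ 1 → ∀ u : SchwartzMap (V m) ℂ,
      eLpNorm (fun x : V m => OpS m h ⇑b (OpL m h ⇑a ⇑u) x - OpL m h ⇑c ⇑u x) 2 volume ≤
        ENNReal.ofReal (C * h ^ ((1:ℝ)/2)) * eLpNorm (⇑u) 2 volume := by
  obtain ⟨C, hC, hbound⟩ := stmt_7_general m a b c hc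
  exact ⟨C, hC, fun h hh hh₁ u => hbound h hh hh₁ u u.integrable⟩
end

section
/- Let α₀ < α₁ be real numbers and δ₁ > 0. Then there exists a smooth complex-valued function ψ on ℝ, with support contained in the open interval (α₀ − δ₁/5, α₁ + δ₁/5) and with ψ = 1 on a neighborhood of [α₀ − δ₁/6, α₁ + δ₁/6], such that ψ(λ)² + (λ − ω)(ψ(λ) − 1) ≠ 0 for all λ ∈ ℝ and all ω ∈ [α₀, α₁]. -/
/-!
The polynomial `p(X) = X² + t (X - 1)` satisfies `p(1) = 1`, so its roots `z`, `w` obey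
`(1 - z) (1 - w) = 1`. For real `t` a nonreal root `z` comes with `w = conj z`, hence lies on the
circle `‖1 - z‖ = 1`. An arc from `0` to `1` whose interior stays off the real axis and inside that
circle can thus meet a root only at its start `0`, and only if `t = 0`. Following such an arc with a
real cutoff function as parameter gives `ψ`, because `x - ω ≠ 0` where the cutoff vanishes.
-/

open Set Topology
open scoped Manifold

lemma sq_norm_ofReal_sub_of_quadratic_eq_zero {z : ℂ} {b c : ℝ} (him : z.im ≠ 0)
    (hz : z ^ 2 + b * z + c = 0) (a : ℝ) : ‖(a : ℂ) - z‖ ^ 2 = a ^ 2 + b * a + c := by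
  have hre : z.re ^ 2 - z.im ^ 2 + b * z.re + c = 0 := by
    simpa [pow_two] using congrArg Complex.re hz
  have him_mul : z.im * (2 * z.re + b) = 0 := by
    have h : z.re * z.im + z.im * z.re + b * z.im = 0 := by
      simpa [pow_two] using congrArg Complex.im hz
    linear_combination h
  have hsum : 2 * z.re + b = 0 := (mul_eq_zero.1 him_mul).resolve_left him
  have hnorm : ‖(a : ℂ) - z‖ ^ 2 = (a - z.re) ^ 2 + z.im ^ 2 := by
    simp [Complex.sq_norm, Complex.normSq_apply, ← pow_two]
  linear_combination hnorm - hre + (z.re - a) * hsum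

lemma sq_add_mul_sub_one_ne_zero_of_norm_one_sub_lt_one {z : ℂ} (him : z.im ≠ 0)
    (hz : ‖1 - z‖ < 1) (t : ℝ) : z ^ 2 + (t : ℂ) * (z - 1) ≠ 0 := by
  intro h
  have hroot : z ^ 2 + (t : ℂ) * z + ((-t : ℝ) : ℂ) = 0 := by
    push_cast
    linear_combination h
  have hcircle : ‖1 - z‖ ^ 2 = 1 := by
    simpa using sq_norm_ofReal_sub_of_quadratic_eq_zero him hroot 1
  exact (pow_lt_one₀ (norm_nonneg _) hz two_ne_zero).ne hcircle

/-- A parabolic arc in `ℂ` from `0` to `1`, parametrized by `s ∈ [0, 1]`, along which the cutoff is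
deformed. Its interior lies in the upper half of the unit disc centred at `1`. -/
noncomputable def parabolicArc (s : ℝ) : ℂ := ⟨s, s * (1 - s)⟩

namespace parabolicArc

@[simp] lemma apply_zero : parabolicArc 0 = 0 := by
  simp [parabolicArc, Complex.ext_iff]

@[simp] lemma apply_one : parabolicArc 1 = 1 := by
  simp [parabolicArc, Complex.ext_iff]

lemma contDiff {n : WithTop ℕ∞} : ContDiff ℝ n parabolicArc := by
  have h : ContDiff ℝ n fun s : ℝ ↦ Complex.equivRealProdCLM.symm (s, s * (1 - s)) :=
    Complex.equivRealProdCLM.symm.contDiff.comp (by fun_prop)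
  exact h

lemma im_ne_zero {s : ℝ} (hs : s ∈ Ioo 0 1) : (parabolicArc s).im ≠ 0 :=
  (mul_pos hs.1 (sub_pos.2 hs.2)).ne'

lemma norm_one_sub_lt_one {s : ℝ} (hs : s ∈ Ioo 0 1) : ‖1 - parabolicArc s‖ < 1 := by
  obtain ⟨hs0, hs1⟩ := hs
  refine (sq_lt_one_iff₀ (norm_nonneg _)).1 ?_
  calc ‖1 - parabolicArc s‖ ^ 2 = (1 - s) ^ 2 * (1 + s ^ 2) := by
        simp only [Complex.sq_norm, Complex.normSq_apply, parabolicArc, Complex.sub_re,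
          Complex.sub_im, Complex.one_re, Complex.one_im]
        ring
    _ ≤ (1 - s) ^ 2 * (1 + s) ^ 2 := by gcongr; nlinarith
    _ = (1 - s ^ 2) ^ 2 := by ring
    _ < 1 := by
      refine pow_lt_one₀ ?_ ?_ two_ne_zero <;> nlinarith

lemma sq_add_mul_sub_one_ne_zero {s t : ℝ} (hs : s ∈ Icc 0 1) (hst : t = 0 → s ≠ 0) :
    parabolicArc s ^ 2 + (t : ℂ) * (parabolicArc s - 1) ≠ 0 := by
  rcases eq_endpoints_or_mem_Ioo_of_mem_Icc hs with rfl | rfl | hs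
  · have ht : t ≠ 0 := fun ht ↦ hst ht rfl
    simpa using ht
  · simp
  · exact sq_add_mul_sub_one_ne_zero_of_norm_one_sub_lt_one (im_ne_zero hs)
      (norm_one_sub_lt_one hs) t

end parabolicArc

section Cutoff

variable {E : Type*} [NormedAddCommGroup E] [NormedSpace ℝ E] [FiniteDimensional ℝ E] {K U : Set E}

lemma exists_contDiff_tsupport_subset_eventually_eq_one (n : ℕ∞) (hK : IsClosed K) (hU : IsOpen U)
    (hKU : K ⊆ U) :
    ∃ f : E → ℝ, ContDiff ℝ n f ∧ tsupport f ⊆ U ∧ (∀ᶠ x in 𝓝ˢ K, f x = 1) ∧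
      ∀ x, f x ∈ Icc 0 1 := by
  obtain ⟨f, hzero, hone, hf⟩ := exists_contMDiffMap_zero_one_nhds_of_isClosed (n := n) 𝓘(ℝ, E)
    hU.isClosed_compl hK (disjoint_compl_left_iff_subset.2 hKU)
  refine ⟨f, f.contMDiff.contDiff, fun x hx ↦ ?_, hone, hf⟩
  by_contra hxU
  exact notMem_tsupport_iff_eventuallyEq.2 (eventually_nhdsSet_iff_forall.1 hzero x hxU) hx

theorem stmt_9_general (hK : IsClosed K) (hU : IsOpen U) (hKU : K ⊆ U) :
    ∃ ψ : E → ℂ, ContDiff ℝ (⊤ : ℕ∞) ψ ∧ tsupport ψ ⊆ U ∧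
      (∃ V : Set E, IsOpen V ∧ K ⊆ V ∧ ∀ x ∈ V, ψ x = 1) ∧
      ∀ x : E, ∀ t : ℝ, (t = 0 → x ∈ K) → ψ x ^ 2 + (t : ℂ) * (ψ x - 1) ≠ 0 := by
  obtain ⟨f, hf, hfU, hone, hf01⟩ :=
    exists_contDiff_tsupport_subset_eventually_eq_one ⊤ hK hU hKU
  obtain ⟨V, hV, hKV, hfV⟩ := eventually_nhdsSet_iff_exists.1 hone
  refine ⟨parabolicArc ∘ f, parabolicArc.contDiff.comp hf,
    (tsupport_comp_subset parabolicArc.apply_zero f).trans hfU,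
    ⟨V, hV, hKV, fun x hx ↦ by simp [hfV x hx]⟩, fun x t hxt ↦ ?_⟩
  exact parabolicArc.sq_add_mul_sub_one_ne_zero (hf01 x)
    fun ht ↦ by simp [hfV x (hKV (hxt ht))]

end Cutoff

/-- given `α₀ < α₁` and `δ₁ > 0`, there is a smooth complex-valued `ψ` on `ℝ`,
supported in `(α₀ − δ₁/5, α₁ + δ₁/5)` and equal to `1` on a neighborhood of
`[α₀ − δ₁/6, α₁ + δ₁/6]`, such that `ψ(λ)² + (λ − ω)(ψ(λ) − 1) ≠ 0` for all real `λ`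
and all `ω ∈ [α₀, α₁]`. -/
theorem stmt_9 (α₀ α₁ δ₁ : ℝ) (hα : α₀ < α₁) (hδ : 0 < δ₁) :
    ∃ ψ : ℝ → ℂ, ContDiff ℝ (⊤ : ℕ∞) ψ ∧
      tsupport ψ ⊆ Set.Ioo (α₀ - δ₁/5) (α₁ + δ₁/5) ∧
      (∃ U : Set ℝ, IsOpen U ∧ Set.Icc (α₀ - δ₁/6) (α₁ + δ₁/6) ⊆ U ∧ ∀ x ∈ U, ψ x = 1) ∧
      ∀ x : ℝ, ∀ ω ∈ Set.Icc α₀ α₁,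
        ψ x ^ 2 + Complex.ofReal (x - ω) * (ψ x - 1) ≠ 0 := by
  obtain ⟨ψ, hψ, hsupp, hone, hne⟩ :=
    stmt_9_general isClosed_Icc isOpen_Ioo (Icc_subset_Ioo (a₁ := α₀ - δ₁/6) (b₁ := α₁ + δ₁/6)
      (by linarith : α₀ - δ₁/5 < _) (by linarith : _ < α₁ + δ₁/5))
  exact ⟨ψ, hψ, hsupp, hone, fun x ω hω ↦ hne x (x - ω) fun hx ↦
    Icc_subset_Icc (by linarith) (by linarith) (sub_eq_zero.1 hx ▸ hω)⟩
end

section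
/- Fix E > 0 and define on ℝ² (coordinates (r,ρ)): p(r,ρ) = √(ρ² + E/cosh²r), φ₊(r,ρ) = ρ − p(r,ρ) tanh r, φ₋(r,ρ) = ρ + p(r,ρ) tanh r, c₊(r,ρ) = 1 + (ρ/p(r,ρ)) tanh r, c₋(r,ρ) = 1 − (ρ/p(r,ρ)) tanh r, and the Hamiltonian derivative H_p f = (∂_ρ p)(∂_r f) − (∂_r p)(∂_ρ f). Then everywhere on ℝ²: H_p r = ρ/p, H_p ρ = (p² − ρ²) tanh(r)/p, H_p φ₊ = −c₊ φ₊, H_p φ₋ = c₋ φ₋; and the Poisson bracket {φ₊, φ₋} = (∂_ρ φ₊)(∂_r φ₋) − (∂_r φ₊)(∂_ρ φ₋) evaluated at (r,ρ) = (0,0) equals 2√E = 2 p(0,0). -/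
/-- `p(r,ρ) = √(ρ² + E/cosh²r)`. -/
noncomputable def pF (E : ℝ) (q : ℝ × ℝ) : ℝ :=
  Real.sqrt (q.2 ^ 2 + E / Real.cosh q.1 ^ 2)

/-- `φ₊(r,ρ) = ρ − p(r,ρ) tanh r`. -/
noncomputable def phiP (E : ℝ) (q : ℝ × ℝ) : ℝ := q.2 - pF E q * Real.tanh q.1

/-- `φ₋(r,ρ) = ρ + p(r,ρ) tanh r`. -/
noncomputable def phiM (E : ℝ) (q : ℝ × ℝ) : ℝ := q.2 + pF E q * Real.tanh q.1

/-- `c₊(r,ρ) = 1 + (ρ/p) tanh r`. -/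
noncomputable def cP (E : ℝ) (q : ℝ × ℝ) : ℝ := 1 + q.2 / pF E q * Real.tanh q.1

/-- `c₋(r,ρ) = 1 − (ρ/p) tanh r`. -/
noncomputable def cM (E : ℝ) (q : ℝ × ℝ) : ℝ := 1 - q.2 / pF E q * Real.tanh q.1

/-- The Hamiltonian derivative `H_p f = (∂_ρ p)(∂_r f) − (∂_r p)(∂_ρ f)`. -/
noncomputable def Hp (E : ℝ) (f : ℝ × ℝ → ℝ) (q : ℝ × ℝ) : ℝ :=
  deriv (fun s => pF E (q.1, s)) q.2 * deriv (fun s => f (s, q.2)) q.1 -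
    deriv (fun s => pF E (s, q.2)) q.1 * deriv (fun s => f (q.1, s)) q.2

/-!
`H_p` is the Poisson bracket `{p, ·}`, a derivation that kills `p`. Applied to `φ± = ρ ∓ p tanh r`
it gives `H_p φ± = H_p ρ ∓ p H_p (tanh r)`, where `H_p ρ = -∂_r p` and
`H_p (tanh r) = (ρ / p) (1 - tanh² r)`; the sum factors as `∓ c± φ±`. By bilinearity and
antisymmetry `{φ₊, φ₋} = 2 {ρ, p tanh r} = 2 ∂_r (p tanh r)`, which on the line `r = 0` is `2 p`.
-/

section PoissonBracket

variable {𝕜 : Type*} [NontriviallyNormedField 𝕜] {g h : 𝕜 × 𝕜 → 𝕜} {q : 𝕜 × 𝕜}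

/-- The canonical Poisson bracket `{f, g} = (∂_ρ f)(∂_r g) − (∂_r f)(∂_ρ g)` on the phase plane
with coordinates `(r, ρ)`, signed so that `{ρ, r} = 1` and `Hp E = {p, ·}`. The partial derivatives
are one-variable `deriv`s, so the derivation rules need differentiability. -/
noncomputable def poissonBracket (f g : 𝕜 × 𝕜 → 𝕜) (q : 𝕜 × 𝕜) : 𝕜 :=
  deriv (fun s => f (q.1, s)) q.2 * deriv (fun s => g (s, q.2)) q.1 -
    deriv (fun s => f (s, q.2)) q.1 * deriv (fun s => g (q.1, s)) q.2

theorem poissonBracket_self (f : 𝕜 × 𝕜 → 𝕜) (q : 𝕜 × 𝕜) : poissonBracket f f q = 0 := by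
  rw [poissonBracket, mul_comm, sub_self]

theorem poissonBracket_swap (f g : 𝕜 × 𝕜 → 𝕜) (q : 𝕜 × 𝕜) :
    poissonBracket g f q = -poissonBracket f g q := by
  unfold poissonBracket
  ring

theorem poissonBracket_comp_fst (f : 𝕜 × 𝕜 → 𝕜) (h : 𝕜 → 𝕜) (q : 𝕜 × 𝕜) :
    poissonBracket f (h ∘ Prod.fst) q = deriv (fun s => f (q.1, s)) q.2 * deriv h q.1 := by
  simp [poissonBracket]

theorem poissonBracket_fst (f : 𝕜 × 𝕜 → 𝕜) (q : 𝕜 × 𝕜) :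
    poissonBracket f Prod.fst q = deriv (fun s => f (q.1, s)) q.2 := by
  simp [poissonBracket]

theorem poissonBracket_snd (f : 𝕜 × 𝕜 → 𝕜) (q : 𝕜 × 𝕜) :
    poissonBracket f Prod.snd q = -deriv (fun s => f (s, q.2)) q.1 := by
  simp [poissonBracket]

theorem differentiableAt_slice_fst (hg : DifferentiableAt 𝕜 g q) :
    DifferentiableAt 𝕜 (fun s => g (s, q.2)) q.1 :=
  hg.comp q.1 (hasFDerivAt_prodMk_left q.1 q.2).differentiableAt

theorem differentiableAt_slice_snd (hg : DifferentiableAt 𝕜 g q) :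
    DifferentiableAt 𝕜 (fun s => g (q.1, s)) q.2 :=
  hg.comp q.2 (hasFDerivAt_prodMk_right q.1 q.2).differentiableAt

theorem poissonBracket_add_right (f : 𝕜 × 𝕜 → 𝕜)
    (hg : DifferentiableAt 𝕜 g q) (hh : DifferentiableAt 𝕜 h q) :
    poissonBracket f (g + h) q = poissonBracket f g q + poissonBracket f h q := by
  simp only [poissonBracket, Pi.add_apply,
    deriv_fun_add (differentiableAt_slice_fst hg) (differentiableAt_slice_fst hh),
    deriv_fun_add (differentiableAt_slice_snd hg) (differentiableAt_slice_snd hh)]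
  ring

theorem poissonBracket_sub_right (f : 𝕜 × 𝕜 → 𝕜)
    (hg : DifferentiableAt 𝕜 g q) (hh : DifferentiableAt 𝕜 h q) :
    poissonBracket f (g - h) q = poissonBracket f g q - poissonBracket f h q := by
  simp only [poissonBracket, Pi.sub_apply,
    deriv_fun_sub (differentiableAt_slice_fst hg) (differentiableAt_slice_fst hh),
    deriv_fun_sub (differentiableAt_slice_snd hg) (differentiableAt_slice_snd hh)]
  ring

theorem poissonBracket_mul_right (f : 𝕜 × 𝕜 → 𝕜)
    (hg : DifferentiableAt 𝕜 g q) (hh : DifferentiableAt 𝕜 h q) :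
    poissonBracket f (g * h) q = poissonBracket f g q * h q + g q * poissonBracket f h q := by
  simp only [poissonBracket, Pi.mul_apply,
    deriv_fun_mul (differentiableAt_slice_fst hg) (differentiableAt_slice_fst hh),
    deriv_fun_mul (differentiableAt_slice_snd hg) (differentiableAt_slice_snd hh)]
  ring

theorem poissonBracket_sub_add (hg : DifferentiableAt 𝕜 g q) (hh : DifferentiableAt 𝕜 h q) :
    poissonBracket (g - h) (g + h) q = 2 * poissonBracket g h q := by
  calc poissonBracket (g - h) (g + h) q
      = -poissonBracket g (g - h) q - poissonBracket h (g - h) q := by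
        rw [poissonBracket_add_right _ hg hh, poissonBracket_swap g, poissonBracket_swap h,
          ← sub_eq_add_neg]
    _ = poissonBracket g h q - poissonBracket h g q := by
        rw [poissonBracket_sub_right _ hg hh, poissonBracket_sub_right _ hg hh, poissonBracket_self,
          poissonBracket_self]
        ring
    _ = 2 * poissonBracket g h q := by
        rw [poissonBracket_swap g h]
        ring

end PoissonBracket

theorem hasDerivAt_tanh (x : ℝ) : HasDerivAt Real.tanh (1 - Real.tanh x ^ 2) x := by
  have hcosh : Real.cosh x ≠ 0 := (Real.cosh_pos x).ne'
  have h := (Real.hasDerivAt_sinh x).fun_div (Real.hasDerivAt_cosh x) hcosh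
  simp only [← Real.tanh_eq_sinh_div_cosh] at h
  refine h.congr_deriv ?_
  rw [Real.tanh_eq_sinh_div_cosh]
  field_simp

theorem hasDerivAt_div_cosh_sq (E x : ℝ) :
    HasDerivAt (fun x => E / Real.cosh x ^ 2) (-2 * (E / Real.cosh x ^ 2) * Real.tanh x) x := by
  have hcosh : Real.cosh x ≠ 0 := (Real.cosh_pos x).ne'
  have h := (hasDerivAt_const x E).fun_div ((Real.hasDerivAt_cosh x).fun_pow 2)
    (pow_ne_zero 2 hcosh)
  refine h.congr_deriv ?_
  rw [Real.tanh_eq_sinh_div_cosh]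
  field_simp
  norm_num
  ring

section Hamiltonian

variable {E : ℝ} {q : ℝ × ℝ}

theorem pF_pos (hE : 0 < E) (q : ℝ × ℝ) : 0 < pF E q :=
  Real.sqrt_pos.2 (by positivity)

theorem pF_sq_sub_sq (hq : 0 < pF E q) : pF E q ^ 2 - q.2 ^ 2 = E / Real.cosh q.1 ^ 2 := by
  rw [pF, Real.sq_sqrt (Real.sqrt_pos.1 hq).le, add_sub_cancel_left]

theorem differentiableAt_pF (hq : 0 < pF E q) : DifferentiableAt ℝ (pF E) q := by
  have hcosh : DifferentiableAt ℝ (fun q : ℝ × ℝ => E / Real.cosh q.1 ^ 2) q :=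
    (hasDerivAt_div_cosh_sq E q.1).differentiableAt.comp q differentiableAt_fst
  exact ((differentiableAt_snd.pow 2).add hcosh).sqrt (Real.sqrt_pos.1 hq).ne'

theorem hasDerivAt_pF_snd (hq : 0 < pF E q) :
    HasDerivAt (fun s => pF E (q.1, s)) (q.2 / pF E q) q.2 := by
  have h := ((hasDerivAt_pow 2 q.2).add_const (E / Real.cosh q.1 ^ 2)).sqrt (Real.sqrt_pos.1 hq).ne'
  refine h.congr_deriv ?_
  simp [pF, mul_div_mul_left]

theorem hasDerivAt_pF_fst (hq : 0 < pF E q) :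
    HasDerivAt (fun s => pF E (s, q.2))
      (-((pF E q ^ 2 - q.2 ^ 2) * Real.tanh q.1 / pF E q)) q.1 := by
  have h := ((hasDerivAt_div_cosh_sq E q.1).const_add (q.2 ^ 2)).sqrt (Real.sqrt_pos.1 hq).ne'
  refine h.congr_deriv ?_
  rw [pF_sq_sub_sq hq, ← pF.eq_def, mul_assoc, neg_mul, neg_div, mul_div_mul_left _ _ two_ne_zero]

theorem Hp_eq_poissonBracket (E : ℝ) : Hp E = poissonBracket (pF E) :=
  rfl

theorem Hp_fst (hq : 0 < pF E q) : Hp E Prod.fst q = q.2 / pF E q := by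
  rw [Hp_eq_poissonBracket, poissonBracket_fst, (hasDerivAt_pF_snd hq).deriv]

theorem Hp_snd (hq : 0 < pF E q) :
    Hp E Prod.snd q = (pF E q ^ 2 - q.2 ^ 2) * Real.tanh q.1 / pF E q := by
  rw [Hp_eq_poissonBracket, poissonBracket_snd, (hasDerivAt_pF_fst hq).deriv, neg_neg]

theorem differentiableAt_tanh_comp_fst : DifferentiableAt ℝ (Real.tanh ∘ Prod.fst) q :=
  (hasDerivAt_tanh q.1).differentiableAt.comp q differentiableAt_fst

theorem differentiableAt_pF_mul_tanh (hq : 0 < pF E q) :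
    DifferentiableAt ℝ (pF E * Real.tanh ∘ Prod.fst) q :=
  (differentiableAt_pF hq).mul differentiableAt_tanh_comp_fst

theorem Hp_pF_mul_tanh (hq : 0 < pF E q) :
    Hp E (pF E * Real.tanh ∘ Prod.fst) q = q.2 * (1 - Real.tanh q.1 ^ 2) := by
  rw [Hp_eq_poissonBracket, poissonBracket_mul_right _ (differentiableAt_pF hq)
    differentiableAt_tanh_comp_fst, poissonBracket_self, zero_mul, zero_add,
    poissonBracket_comp_fst, (hasDerivAt_pF_snd hq).deriv, (hasDerivAt_tanh q.1).deriv,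
    ← mul_assoc, mul_div_cancel₀ _ hq.ne']

theorem phiP_eq_snd_sub (E : ℝ) : phiP E = Prod.snd - pF E * Real.tanh ∘ Prod.fst :=
  rfl

theorem phiM_eq_snd_add (E : ℝ) : phiM E = Prod.snd + pF E * Real.tanh ∘ Prod.fst :=
  rfl

theorem Hp_phiP (hq : 0 < pF E q) : Hp E (phiP E) q = -(cP E q * phiP E q) := by
  calc Hp E (phiP E) q
      = Hp E Prod.snd q - Hp E (pF E * Real.tanh ∘ Prod.fst) q := by
        rw [phiP_eq_snd_sub, Hp_eq_poissonBracket,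
          poissonBracket_sub_right _ (by fun_prop) (differentiableAt_pF_mul_tanh hq)]
    _ = (pF E q ^ 2 - q.2 ^ 2) * Real.tanh q.1 / pF E q - q.2 * (1 - Real.tanh q.1 ^ 2) := by
        rw [Hp_snd hq, Hp_pF_mul_tanh hq]
    _ = -(cP E q * phiP E q) := by
        rw [cP, phiP]
        field_simp
        ring

theorem Hp_phiM (hq : 0 < pF E q) : Hp E (phiM E) q = cM E q * phiM E q := by
  calc Hp E (phiM E) q
      = Hp E Prod.snd q + Hp E (pF E * Real.tanh ∘ Prod.fst) q := by
        rw [phiM_eq_snd_add, Hp_eq_poissonBracket,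
          poissonBracket_add_right _ (by fun_prop) (differentiableAt_pF_mul_tanh hq)]
    _ = (pF E q ^ 2 - q.2 ^ 2) * Real.tanh q.1 / pF E q + q.2 * (1 - Real.tanh q.1 ^ 2) := by
        rw [Hp_snd hq, Hp_pF_mul_tanh hq]
    _ = cM E q * phiM E q := by
        rw [cM, phiM]
        field_simp
        ring

theorem poissonBracket_phiP_phiM {ρ : ℝ} (h : 0 < pF E (0, ρ)) :
    poissonBracket (phiP E) (phiM E) (0, ρ) = 2 * pF E (0, ρ) := by
  have htanh : poissonBracket Prod.snd (Real.tanh ∘ Prod.fst) ((0, ρ) : ℝ × ℝ) = 1 := by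
    simp [poissonBracket_comp_fst, (hasDerivAt_tanh 0).deriv]
  rw [phiP_eq_snd_sub, phiM_eq_snd_add,
    poissonBracket_sub_add (by fun_prop) (differentiableAt_pF_mul_tanh h),
    poissonBracket_mul_right _ (differentiableAt_pF h) differentiableAt_tanh_comp_fst, htanh]
  simp

theorem pF_zero_zero (E : ℝ) : pF E (0, 0) = √E := by
  simp [pF]

end Hamiltonian

/-- on all of `ℝ²` one has `H_p r = ρ/p`, `H_p ρ = (p² − ρ²) tanh r / p`,
`H_p φ₊ = −c₊ φ₊`, `H_p φ₋ = c₋ φ₋`, and the Poisson bracket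
`{φ₊, φ₋} = (∂_ρ φ₊)(∂_r φ₋) − (∂_r φ₊)(∂_ρ φ₋)` at `(0,0)` equals `2√E = 2 p(0,0)`. -/
theorem stmt_10 (E : ℝ) (hE : 0 < E) :
    (∀ q : ℝ × ℝ, Hp E (fun q' => q'.1) q = q.2 / pF E q) ∧
    (∀ q : ℝ × ℝ, Hp E (fun q' => q'.2) q = (pF E q ^ 2 - q.2 ^ 2) * Real.tanh q.1 / pF E q) ∧
    (∀ q : ℝ × ℝ, Hp E (phiP E) q = -(cP E q * phiP E q)) ∧
    (∀ q : ℝ × ℝ, Hp E (phiM E) q = cM E q * phiM E q) ∧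
    (deriv (fun s => phiP E (0, s)) 0 * deriv (fun s => phiM E (s, 0)) 0 -
        deriv (fun s => phiP E (s, 0)) 0 * deriv (fun s => phiM E (0, s)) 0 = 2 * Real.sqrt E ∧
      2 * Real.sqrt E = 2 * pF E (0, 0)) := by
  have hp := pF_pos hE
  refine ⟨fun q => Hp_fst (hp q), fun q => Hp_snd (hp q), fun q => Hp_phiP (hp q),
    fun q => Hp_phiM (hp q), ?_, by rw [pF_zero_zero]⟩
  rw [← pF_zero_zero E]
  exact poissonBracket_phiP_phiM (hp (0, 0))
end

section
/- Fix an integer n ≥ 1. Let a, b ∈ C_c^∞(ℝ^{2n}) and ψ ∈ C_c^∞(ℝⁿ) satisfy the following support separation condition: for all (x,ξ) ∈ ℝ^{2n} and all t ∈ [0,1], if ((x', t x_n), ξ) ∈ supp a then (x, (ξ', t ξ_n)) ∉ supp b. Then for every N ≥ 0 there exists C_N > 0 such that for all h ∈ (0,1] and all u ∈ 𝒮(ℝⁿ), ‖Op_h(b)(ψ · Ξ₀(Op_h(a)(ψ · u)))‖_{L²(ℝⁿ)} ≤ C_N h^N ‖u‖_{L²(ℝⁿ)}. -/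
open MeasureTheory
open scoped RealInnerProductSpace

/-- The operator `Ξ₀g(x', xₙ) = ∫₀¹ (∂_{xₙ}g)(x', t xₙ) dt`, so that
`xₙ · Ξ₀g(x', xₙ) = g(x', xₙ) − g(x', 0)`. -/
noncomputable def Xi0 (m : ℕ) (g : V m → ℂ) (x : V m) : ℂ :=
  ∫ t in (0:ℝ)..1, deriv (fun s : ℝ => g (x.1, s)) (t * x.2)

/-!
For integrable `v` one has `Op_h(a)v(x) = (2πh)⁻ⁿ ∫ e^{ix·η/h} a(x, η) v̂(η) dη`, where
`v̂(η) = ∫ e^{-iw·η/h} v(w) dw`, so `Ξ₀ Op_h(a)v` is the average over `t ∈ [0, 1]` of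
`h⁻¹ Op_h(c_h)v` composed with the dilation `δ_t(y', yₙ) = (y', t yₙ)`, for the symbol
`c_h = i ηₙ a + h ∂_{yₙ} a`.
Hence `Op_h(b) ψ Ξ₀ Op_h(a)v` is the integral of `v̂` against a kernel given by an oscillatory
integral in `(y, ξ)` with phase `(x - y)·ξ + y·δ_t η` and amplitude `b(x, ξ) ψ(y) c_h(δ_t y, η)`.
The only critical point of the phase is `y = x`, `ξ = δ_t η`, and the support separation keeps it
off the support of the amplitude. Repeated integration by parts, uniform in `(x, η, t, h)` by
compactness, makes the kernel `O(h^N)` for every `N`, which absorbs the powers of `h⁻¹`. As the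
kernel has compact support in `x` and `η`, the operator is `O(h^N)` from `L¹` to `L²`, and
multiplication by a function of `L²` maps `L²` to `L¹`.
-/

namespace Semiclassical

open scoped ContDiff

section OscillatingFactor

/-- The oscillating factor `e^{iθ/h}` of semiclassical integrals, with phase value `θ`. -/
noncomputable def osc (h θ : ℝ) : ℂ := Complex.exp (Complex.I * Complex.ofReal (θ / h))

lemma osc_add (h θ₁ θ₂ : ℝ) : osc h (θ₁ + θ₂) = osc h θ₁ * osc h θ₂ := by
  simp only [osc, add_div, Complex.ofReal_add, mul_add, Complex.exp_add]

lemma norm_osc (h θ : ℝ) : ‖osc h θ‖ = 1 := by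
  rw [osc, mul_comm, Complex.norm_exp_ofReal_mul_I]

@[fun_prop]
lemma continuous_osc (h : ℝ) : Continuous (osc h) := by
  unfold osc
  fun_prop

lemma hasDerivAt_osc (h θ : ℝ) : HasDerivAt (osc h) (osc h θ * (Complex.I * h⁻¹)) θ := by
  have hθ : HasDerivAt (fun θ : ℝ => θ / h) h⁻¹ θ := by
    simpa using (hasDerivAt_id θ).div_const h
  exact (hθ.ofReal_comp.const_mul Complex.I).cexp

end OscillatingFactor

section NonstationaryPhase

lemma tsupport_slice_subset {X Y Z : Type*} [TopologicalSpace X] [TopologicalSpace Y] [Zero Z]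
    {G : X → Y → Z} (x : X) : tsupport (G x) ⊆ {y | (x, y) ∈ tsupport (Function.uncurry G)} :=
  closure_minimal (fun _ hy => subset_tsupport (Function.uncurry G) hy)
    ((isClosed_tsupport _).preimage (by fun_prop))

lemma exists_norm_integral_osc_mul_le {X Y : Type*} [TopologicalSpace X] [TopologicalSpace Y]
    [MeasurableSpace Y] (μ : Measure Y) [IsFiniteMeasureOnCompacts μ] (Φ : X → Y → ℝ) {K : Set X}
    {L : Set Y} (hK : IsCompact K) (hL : IsCompact L) {G : X → Y → ℂ}
    (hG : Continuous (Function.uncurry G)) (hGL : ∀ p, tsupport (G p) ⊆ L) :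
    ∃ C : ℝ, 0 ≤ C ∧ ∀ h : ℝ, ∀ p ∈ K, ‖∫ z, osc h (Φ p z) * G p z ∂μ‖ ≤ C := by
  obtain ⟨M, hM⟩ := (hK.prod hL).exists_bound_of_continuousOn hG.continuousOn
  refine ⟨|M| * μ.real L, by positivity, fun h p hp => ?_⟩
  have hzero : ∀ z ∉ L, osc h (Φ p z) * G p z = 0 := fun z hz => by
    rw [image_eq_zero_of_notMem_tsupport fun hzs => hz (hGL p hzs), mul_zero]
  rw [← setIntegral_eq_integral_of_forall_compl_eq_zero hzero]
  refine norm_setIntegral_le_of_norm_le_const hL.measure_lt_top fun z hz => ?_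
  rw [norm_mul, norm_osc, one_mul]
  exact (hM (p, z) ⟨hp, hz⟩).trans (le_abs_self M)

variable {E : Type*} [NormedAddCommGroup E] [NormedSpace ℝ E]

lemma differentiable_osc_comp {φ : E → ℝ} (hφ : Differentiable ℝ φ) (h : ℝ) :
    Differentiable ℝ fun z => osc h (φ z) :=
  fun z => ((hasDerivAt_osc h (φ z)).hasFDerivAt.comp z (hφ z).hasFDerivAt).differentiableAt

lemma fderiv_osc_comp_apply {φ : E → ℝ} {z : E} (hφ : DifferentiableAt ℝ φ z) (h : ℝ) (v : E) :
    fderiv ℝ (fun z => osc h (φ z)) z v = Complex.I * h⁻¹ * (osc h (φ z) * fderiv ℝ φ z v) := by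
  have hcomp : HasFDerivAt (fun z => osc h (φ z)) _ z :=
    (hasDerivAt_osc h (φ z)).hasFDerivAt.comp z hφ.hasFDerivAt
  rw [hcomp.fderiv]
  simp only [ContinuousLinearMap.comp_apply, ContinuousLinearMap.toSpanSingleton_apply,
    Complex.real_smul, Complex.ofReal_inv]
  ring

lemma contDiff_inv_smul_of_ne_zero_on_tsupport {F : Type*} [NormedAddCommGroup F]
    [NormedSpace ℝ F] {n : WithTop ℕ∞} {f : E → F} {g : E → ℝ} (hf : ContDiff ℝ n f)
    (hg : ContDiff ℝ n g) (hne : ∀ x ∈ tsupport f, g x ≠ 0) :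
    ContDiff ℝ n fun x => (g x)⁻¹ • f x := by
  rw [contDiff_iff_contDiffAt]
  intro x
  by_cases hx : x ∈ tsupport f
  · exact (hg.contDiffAt.inv (hne x hx)).smul hf.contDiffAt
  · have hzero : (fun x => (g x)⁻¹ • f x) =ᶠ[nhds x] fun _ => 0 := by
      filter_upwards [(isClosed_tsupport f).isOpen_compl.mem_nhds hx] with y hy
      rw [image_eq_zero_of_notMem_tsupport hy, smul_zero]
    exact contDiffAt_const.congr_of_eventuallyEq hzero

lemma tsupport_partialFDeriv_apply_subset {X F : Type*} [TopologicalSpace X]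
    [NormedAddCommGroup F] [NormedSpace ℝ F] (G : X → E → F) (v : E) :
    tsupport (Function.uncurry fun x z => fderiv ℝ (G x) z v) ⊆ tsupport (Function.uncurry G) := by
  refine closure_minimal (fun q hq => ?_) (isClosed_tsupport _)
  exact tsupport_slice_subset q.1 (tsupport_fderiv_apply_subset ℝ v (subset_tsupport _ hq))

variable {P : Type*} [NormedAddCommGroup P] [NormedSpace ℝ P]

lemma contDiff_partialFDeriv_apply {F : Type*} [NormedAddCommGroup F] [NormedSpace ℝ F]
    {G : P → E → F} (hG : ContDiff ℝ ∞ (Function.uncurry G)) (v : E) :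
    ContDiff ℝ ∞ (Function.uncurry fun p z => fderiv ℝ (G p) z v) := by
  refine ContDiff.fderiv_apply (m := ∞) (f := fun q : P × E => G q.1) (k := fun _ => v) ?_
    contDiff_snd contDiff_const (by simp)
  exact hG.comp (g := Function.uncurry G) (f := fun r : (P × E) × E => (r.1.1, r.2)) (by fun_prop)

variable [FiniteDimensional ℝ E]

-- The vector field `∇Φ / |∇Φ|²`, whose coordinates multiply `G` here, turns `e^{iΦ/h}` into
-- a derivative of itself.
lemma exists_eq_sum_partialFDeriv_mul {Φ : P → E → ℝ} (hΦ : ContDiff ℝ ∞ (Function.uncurry Φ))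
    {G : P → E → ℂ} (hG : ContDiff ℝ ∞ (Function.uncurry G))
    (hne : ∀ q ∈ tsupport (Function.uncurry G), fderiv ℝ (Φ q.1) q.2 ≠ 0) :
    ∃ g : Fin (Module.finrank ℝ E) → P → E → ℂ,
      (∀ i, ContDiff ℝ ∞ (Function.uncurry (g i))) ∧
      (∀ i, tsupport (Function.uncurry (g i)) ⊆ tsupport (Function.uncurry G)) ∧
      ∀ p z, G p z = ∑ i, (fderiv ℝ (Φ p) z (Module.finBasis ℝ E i) : ℂ) * g i p z := by
  set e := Module.finBasis ℝ E
  let D (i) (q : P × E) : ℝ := fderiv ℝ (Φ q.1) q.2 (e i)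
  let Q (q : P × E) : ℝ := ∑ i, D i q ^ 2
  have hD i : ContDiff ℝ ∞ (D i) := contDiff_partialFDeriv_apply hΦ (e i)
  have hQ : ContDiff ℝ ∞ Q := ContDiff.sum fun i _ => (hD i).pow 2
  have hQne : ∀ q ∈ tsupport (Function.uncurry G), Q q ≠ 0 := by
    intro q hq hQq
    have hDq i : D i q = 0 := by
      simpa using (Finset.sum_eq_zero_iff_of_nonneg fun i _ => sq_nonneg (D i q)).1 hQq i
    exact hne q hq (ContinuousLinearMap.coe_injective (e.ext hDq))
  let g (i) (p : P) (z : E) : ℂ := D i (p, z) * ((Q (p, z))⁻¹ • G p z)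
  refine ⟨g, fun i => ?_, fun i => ?_, fun p z => ?_⟩
  · exact (Complex.ofRealCLM.contDiff.comp (hD i)).mul
      (contDiff_inv_smul_of_ne_zero_on_tsupport hG hQ hQne)
  · refine closure_mono fun q hq hGq => hq ?_
    simp only [Function.uncurry] at hGq
    simp [Function.uncurry, g, hGq]
  · by_cases hq : (p, z) ∈ tsupport (Function.uncurry G)
    · have hQq : (Q (p, z) : ℂ) ≠ 0 := by exact_mod_cast hQne _ hq
      calc G p z = Q (p, z) * ((Q (p, z))⁻¹ • G p z) := by
            rw [Complex.real_smul, Complex.ofReal_inv, mul_inv_cancel_left₀ hQq]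
        _ = ∑ i, (D i (p, z) : ℂ) * g i p z := by
            simp only [g, ← mul_assoc, ← Finset.sum_mul, ← sq, Q, Complex.ofReal_sum,
              Complex.ofReal_pow]
    · have hGq : G p z = 0 :=
        image_eq_zero_of_notMem_tsupport (f := Function.uncurry G) hq
      simp [g, hGq]

variable [MeasurableSpace E] [BorelSpace E] (μ : Measure E) [μ.IsAddHaarMeasure]

lemma integral_osc_mul_fderiv {φ : E → ℝ} {g : E → ℂ} (hφ : ContDiff ℝ 1 φ) (hg : ContDiff ℝ 1 g)
    (hgc : HasCompactSupport g) (v : E) {h : ℝ} (hh : h ≠ 0) :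
    ∫ z, osc h (φ z) * (fderiv ℝ φ z v * g z) ∂μ =
      Complex.I * h * ∫ z, osc h (φ z) * fderiv ℝ g z v ∂μ := by
  have hφd : Differentiable ℝ φ := hφ.differentiable one_ne_zero
  have hgd : Differentiable ℝ g := hg.differentiable one_ne_zero
  have hoscd := differentiable_osc_comp hφd h
  have hosc : Continuous fun z => osc h (φ z) := hoscd.continuous
  have hφ' : Continuous fun z => (fderiv ℝ φ z v : ℂ) :=
    Complex.continuous_ofReal.comp
      ((hφ.continuous_fderiv one_ne_zero).clm_apply continuous_const)
  have hg' : Continuous fun z => fderiv ℝ g z v :=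
    (hg.continuous_fderiv one_ne_zero).clm_apply continuous_const
  have hoscφ' z := fderiv_osc_comp_apply (hφd z) h v
  have parts := integral_mul_fderiv_eq_neg_fderiv_mul_of_integrable (μ := μ) (v := v)
    (f := fun z => osc h (φ z)) (g := g)
    (by
      simp only [hoscφ']
      exact (continuous_const.mul (hosc.mul hφ') |>.mul
        hg.continuous).integrable_of_hasCompactSupport hgc.mul_left)
    ((hosc.mul hg').integrable_of_hasCompactSupport (hgc.fderiv_apply ℝ v).mul_left)
    ((hosc.mul hg.continuous).integrable_of_hasCompactSupport hgc.mul_left)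
    (fun z _ => hoscd z) (fun z _ => hgd z)
  simp only [hoscφ', mul_assoc, integral_const_mul] at parts
  rw [parts]
  have : (h : ℂ) ≠ 0 := by exact_mod_cast hh
  push_cast
  field_simp
  simp

lemma integral_osc_mul_sum_fderiv {ι : Type*} [Fintype ι] {φ : E → ℝ} {g : ι → E → ℂ}
    (hφ : ContDiff ℝ 1 φ) (hg : ∀ i, ContDiff ℝ 1 (g i)) (hgc : ∀ i, HasCompactSupport (g i))
    (v : ι → E) {h : ℝ} (hh : h ≠ 0) :
    ∫ z, osc h (φ z) * ∑ i, (fderiv ℝ φ z (v i) : ℂ) * g i z ∂μ =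
      Complex.I * h * ∑ i, ∫ z, osc h (φ z) * fderiv ℝ (g i) z (v i) ∂μ := by
  have hint i : Integrable (fun z => osc h (φ z) * (fderiv ℝ φ z (v i) * g i z)) μ := by
    have hφ' : Continuous fun z => (fderiv ℝ φ z (v i) : ℂ) :=
      Complex.continuous_ofReal.comp
        ((hφ.continuous_fderiv one_ne_zero).clm_apply continuous_const)
    exact (((continuous_osc h).comp hφ.continuous).mul
      (hφ'.mul (hg i).continuous)).integrable_of_hasCompactSupport (hgc i).mul_left.mul_left
  simp only [Finset.mul_sum]
  rw [integral_finsetSum _ fun i _ => hint i]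
  exact Finset.sum_congr rfl fun i _ => integral_osc_mul_fderiv μ hφ (hg i) (hgc i) (v i) hh

theorem exists_norm_integral_osc_mul_le_pow {Φ : P → E → ℝ}
    (hΦ : ContDiff ℝ ∞ (Function.uncurry Φ)) {S : Set (P × E)} {K : Set P} {L : Set E}
    (hK : IsCompact K) (hL : IsCompact L) (hSL : ∀ q ∈ S, q.2 ∈ L)
    (hne : ∀ q ∈ S, fderiv ℝ (Φ q.1) q.2 ≠ 0) (N : ℕ) {G : P → E → ℂ}
    (hG : ContDiff ℝ ∞ (Function.uncurry G)) (hGS : tsupport (Function.uncurry G) ⊆ S) :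
    ∃ C : ℝ, 0 ≤ C ∧ ∀ h : ℝ, 0 < h → ∀ p ∈ K,
      ‖∫ z, osc h (Φ p z) * G p z ∂μ‖ ≤ C * h ^ N := by
  have hslice {G : P → E → ℂ} (hGS : tsupport (Function.uncurry G) ⊆ S) (p : P) :
      tsupport (G p) ⊆ L := fun _ hz => hSL _ (hGS (tsupport_slice_subset p hz))
  induction N generalizing G with
  | zero =>
    obtain ⟨C, hC0, hC⟩ :=
      exists_norm_integral_osc_mul_le μ Φ hK hL hG.continuous (hslice hGS)
    exact ⟨C, hC0, fun h _ p hp => by simpa using hC h p hp⟩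
  | succ N ih =>
    obtain ⟨g, hg, hgG, hsum⟩ := exists_eq_sum_partialFDeriv_mul hΦ hG fun q hq => hne q (hGS hq)
    set e := Module.finBasis ℝ E
    have hgS i := (hgG i).trans hGS
    choose C hC0 hC using fun i => ih (contDiff_partialFDeriv_apply (hg i) (e i))
      ((tsupport_partialFDeriv_apply_subset (g i) (e i)).trans (hgS i))
    refine ⟨∑ i, C i, Finset.sum_nonneg fun i _ => hC0 i, fun h hh p hp => ?_⟩
    have hparts : ∫ z, osc h (Φ p z) * G p z ∂μ =
        Complex.I * h * ∑ i, ∫ z, osc h (Φ p z) * fderiv ℝ (g i p) z (e i) ∂μ := by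
      simp only [hsum]
      exact integral_osc_mul_sum_fderiv μ ((hΦ.comp (contDiff_prodMk_right p)).of_le (by simp))
        (fun i => ((hg i).comp (contDiff_prodMk_right p)).of_le (by simp))
        (fun i => hL.of_isClosed_subset (isClosed_tsupport _) (hslice (hgS i) p)) e hh.ne'
    calc ‖∫ z, osc h (Φ p z) * G p z ∂μ‖
        = h * ‖∑ i, ∫ z, osc h (Φ p z) * fderiv ℝ (g i p) z (e i) ∂μ‖ := by
          rw [hparts, norm_mul, norm_mul, Complex.norm_I, one_mul, Complex.norm_real,
            Real.norm_of_nonneg hh.le]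
      _ ≤ h * ∑ i, C i * h ^ N := by
          gcongr
          exact (norm_sum_le _ _).trans (Finset.sum_le_sum fun i _ => hC i h hh p hp)
      _ = (∑ i, C i) * h ^ (N + 1) := by
          rw [← Finset.sum_mul]
          ring

end NonstationaryPhase

section Duality

variable {m : ℕ}

/-- The scalar product `x · ξ` of `ℝⁿ`, as a continuous bilinear form: `V m` carries the sup norm
of its two components and is therefore not an inner product space. -/
noncomputable def dot : V m →L[ℝ] V m →L[ℝ] ℝ :=
  (innerSL ℝ).bilinearComp (.fst ℝ _ ℝ) (.fst ℝ _ ℝ) +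
    (ContinuousLinearMap.mul ℝ ℝ).bilinearComp (.snd ℝ _ ℝ) (.snd ℝ _ ℝ)

lemma dot_apply (x ξ : V m) : dot x ξ = ⟪x.1, ξ.1⟫ + x.2 * ξ.2 := rfl

lemma eq_zero_of_dot_self_eq_zero {x : V m} (hx : dot x x = 0) : x = 0 := by
  rw [dot_apply, real_inner_self_eq_norm_sq, ← sq] at hx
  obtain ⟨hx₁, hx₂⟩ := (add_eq_zero_iff_of_nonneg (sq_nonneg _) (sq_nonneg _)).1 hx
  exact Prod.ext (norm_eq_zero.1 (sq_eq_zero_iff.1 hx₁)) (sq_eq_zero_iff.1 hx₂)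

lemma dot_self_nonneg (x : V m) : 0 ≤ dot x x := by
  rw [dot_apply, real_inner_self_eq_norm_sq, ← sq]
  positivity

/-- The dilation `δ_t (x', xₙ) = (x', t xₙ)` of the last coordinate. -/
def dilate (t : ℝ) (x : V m) : V m := (x.1, t * x.2)

lemma dot_dilate_left (t : ℝ) (x ξ : V m) : dot (dilate t x) ξ = dot x (dilate t ξ) := by
  simp only [dot_apply, dilate]
  ring

-- The phase of `Op_h(b) ψ` applied to the exponential `e^{iy·ζ/h}`, with `z = (y, ξ)`.
lemma fderiv_phase_ne_zero {x ζ : V m} {z : V m × V m} (hz : z ≠ (x, ζ)) :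
    fderiv ℝ (fun z : V m × V m => dot (x - z.1) z.2 + dot z.1 ζ) z ≠ 0 := by
  intro hcrit
  have hderiv : HasFDerivAt (fun z : V m × V m => dot (x - z.1) z.2 + dot z.1 ζ) _ z :=
    ((dot.hasFDerivAt.comp z (hasFDerivAt_fst.const_sub x)).clm_apply hasFDerivAt_snd).add
      ((dot.flip ζ).hasFDerivAt.comp z hasFDerivAt_fst)
  have hsum : dot (ζ - z.2) (ζ - z.2) + dot (x - z.1) (x - z.1) = 0 := by
    have hdir := DFunLike.congr_fun (hderiv.fderiv.symm.trans hcrit) (ζ - z.2, x - z.1)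
    simp only [Function.comp_apply, map_sub, ContinuousLinearMap.sub_comp,
      ContinuousLinearMap.comp_neg, add_apply, sub_apply, ContinuousLinearMap.comp_apply,
      ContinuousLinearMap.coe_snd', ContinuousLinearMap.flip_apply, neg_apply,
      ContinuousLinearMap.coe_fst', neg_sub, zero_apply] at hdir
    simp only [map_sub, sub_apply]
    linarith
  obtain ⟨hξ, hy⟩ :=
    (add_eq_zero_iff_of_nonneg (dot_self_nonneg _) (dot_self_nonneg _)).1 hsum
  exact hz (Prod.ext (sub_eq_zero.1 (eq_zero_of_dot_self_eq_zero hy)).symm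
    (sub_eq_zero.1 (eq_zero_of_dot_self_eq_zero hξ)).symm)

lemma isAddHaarMeasure_volume (m : ℕ) : (volume : Measure (V m)).IsAddHaarMeasure :=
  Measure.prod.instIsAddHaarMeasure _ _

lemma contDiff_dilate {n : WithTop ℕ∞} : ContDiff ℝ n fun q : ℝ × V m => dilate q.1 q.2 := by
  unfold dilate
  fun_prop

end Duality

section ParametricIntegrals

variable {X E : Type*} [TopologicalSpace X] [MeasurableSpace X] [NormedAddCommGroup E]
  [NormedSpace ℝ E]

lemma hasDerivAt_integral_of_compact_support [T2Space X] [OpensMeasurableSpace X] {μ : Measure X}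
    [IsFiniteMeasureOnCompacts μ] {f f' : ℝ → X → E} (hf : Continuous (Function.uncurry f))
    (hf' : Continuous (Function.uncurry f')) (hderiv : ∀ s x, HasDerivAt (f · x) (f' s x) s)
    {K : Set X} (hK : IsCompact K) (hfK : ∀ s, ∀ x ∉ K, f s x = 0) (s : ℝ) :
    HasDerivAt (fun s => ∫ x, f s x ∂μ) (∫ x, f' s x ∂μ) s := by
  have hfK' s x (hx : x ∉ K) : f' s x = 0 := by
    simpa only [hfK _ x hx, deriv_const] using (hderiv s x).deriv.symm
  have hint {g : ℝ → X → E} (hg : Continuous (Function.uncurry g))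
      (hgK : ∀ s, ∀ x ∉ K, g s x = 0) (s : ℝ) : Integrable (g s) μ :=
    (hg.comp (.prodMk_right s)).integrable_of_hasCompactSupport (.intro hK (hgK s))
  obtain ⟨M, hM⟩ :=
    ((isCompact_closedBall s 1).prod hK).exists_bound_of_continuousOn hf'.continuousOn
  refine (hasDerivAt_integral_of_dominated_loc_of_deriv_le (bound := K.indicator fun _ => M)
    (Metric.ball_mem_nhds s one_pos) (.of_forall fun s => (hint hf hfK s).aestronglyMeasurable)
    (hint hf hfK s) (hint hf' hfK' s).aestronglyMeasurable (.of_forall fun x r hr => ?_)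
    ((integrable_indicator_iff hK.measurableSet).2 (integrableOn_const hK.measure_lt_top.ne))
    (.of_forall fun x r _ => hderiv r x)).2
  by_cases hx : x ∈ K
  · rw [Set.indicator_of_mem hx]
    exact hM (r, x) ⟨Metric.ball_subset_closedBall hr, hx⟩
  · rw [Set.indicator_of_notMem hx, hfK' _ _ hx, norm_zero]

lemma intervalIntegral_zero_one_eq_integral_unitInterval (f : ℝ → E) :
    ∫ t in (0 : ℝ)..1, f t = ∫ t : unitInterval, f t := by
  rw [intervalIntegral.integral_of_le zero_le_one, ← integral_Icc_eq_integral_Ioc]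
  exact (integral_subtype measurableSet_Icc f).symm

end ParametricIntegrals

section Quantization

variable {m : ℕ} {h : ℝ}

/-- The semiclassical Fourier transform `η ↦ ∫ e^{-iw·η/h} v(w) dw`. -/
noncomputable def semiFourier (h : ℝ) (v : V m → ℂ) (η : V m) : ℂ :=
  ∫ w, osc h (-dot w η) * v w

lemma norm_semiFourier_le (h : ℝ) (v : V m → ℂ) (η : V m) :
    ‖semiFourier h v η‖ ≤ ∫ w, ‖v w‖ := by
  refine (norm_integral_le_integral_norm _).trans_eq ?_
  simp only [norm_mul, norm_osc, one_mul]

lemma continuous_semiFourier (h : ℝ) {v : V m → ℂ} (hv : Integrable v) :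
    Continuous (semiFourier h v) := by
  refine continuous_of_dominated (bound := fun w => ‖v w‖) (fun η => ?_) (fun η => ?_) hv.norm ?_
  · exact Continuous.aestronglyMeasurable (by fun_prop) |>.mul hv.aestronglyMeasurable
  · exact .of_forall fun w => by rw [norm_mul, norm_osc, one_mul]
  · exact .of_forall fun w => by fun_prop

lemma OpS_eq_integral_semiFourier {c : V m × V m → ℂ} {x : V m}
    (hc : Integrable fun η => c (x, η)) {v : V m → ℂ} (hv : Integrable v) :
    OpS m h c v x = ((2 * Real.pi * h) ^ (m + 1))⁻¹ •
      ∫ η, osc h (dot x η) * c (x, η) * semiFourier h v η := by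
  let F (p : V m × V m) : ℂ := osc h (dot (x - p.1) p.2) * (v p.1 * c (x, p.2))
  have hF : Integrable F (volume.prod volume) :=
    (hv.mul_prod hc).bdd_mul (c := 1) (Continuous.aestronglyMeasurable (by fun_prop))
      (.of_forall fun p => (norm_osc _ _).le)
  calc OpS m h c v x = ((2 * Real.pi * h) ^ (m + 1))⁻¹ • ∫ p, F p := by
        refine congrArg _ (integral_congr_ae (.of_forall fun p => ?_))
        change osc h (dot (x - p.1) p.2) * c (x, p.2) * v p.1 = F p
        ring
    _ = ((2 * Real.pi * h) ^ (m + 1))⁻¹ • ∫ η, ∫ w, F (w, η) := by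
        rw [Measure.volume_eq_prod, integral_prod_symm F hF]
    _ = _ := by
        simp only [semiFourier, ← integral_const_mul, F]
        congr! 5
        rw [map_sub, sub_apply, sub_eq_add_neg, osc_add]
        ring

/-- The symbol of `h ∂_{xₙ} Op_h(a)`. -/
noncomputable def normalDerivSymbol (a : V m × V m → ℂ) (h : ℝ) (q : V m × V m) : ℂ :=
  Complex.I * q.2.2 * a q + h * fderiv ℝ a q ((0, 1), 0)

lemma contDiff_normalDerivSymbol {n : WithTop ℕ∞} {a : V m × V m → ℂ}
    (ha : ContDiff ℝ (n + 1) a) :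
    ContDiff ℝ n (Function.uncurry (normalDerivSymbol a)) := by
  have ha₀ : ContDiff ℝ n a := ha.of_le le_self_add
  have hofReal : ContDiff ℝ n (fun r : ℝ => (r : ℂ)) := Complex.ofRealCLM.contDiff
  have hmul : ContDiff ℝ n fun p : ℝ × V m × V m => Complex.I * p.2.2.2 * a p.2 := by fun_prop
  exact hmul.add ((hofReal.comp contDiff_fst).mul
    (((ha.fderiv_right le_rfl).clm_apply contDiff_const).comp contDiff_snd))

lemma tsupport_normalDerivSymbol_subset (a : V m × V m → ℂ) (h : ℝ) :
    tsupport (normalDerivSymbol a h) ⊆ tsupport a := by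
  refine closure_minimal (fun q hq => ?_) (isClosed_tsupport a)
  by_contra hqa
  have hq' : q ∉ tsupport (fderiv ℝ a) := fun h => hqa (tsupport_fderiv_subset ℝ h)
  exact hq (by simp [normalDerivSymbol, image_eq_zero_of_notMem_tsupport hqa,
    image_eq_zero_of_notMem_tsupport hq'])

lemma integrable_slice_of_hasCompactSupport {c : V m × V m → ℂ} (hc : Continuous c)
    (hcc : HasCompactSupport c) (x : V m) : Integrable fun η => c (x, η) :=
  (hc.comp (.prodMk_right x)).integrable_of_hasCompactSupport <|
    .intro (hcc.image continuous_snd) fun η hη =>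
      image_eq_zero_of_notMem_tsupport (f := c) fun h => hη ⟨(x, η), h, rfl⟩

lemma hasDerivAt_osc_mul_symbol {a : V m × V m → ℂ} (ha : Differentiable ℝ a) (hh : h ≠ 0)
    (y : EuclideanSpace ℝ (Fin m)) (s : ℝ) (η : V m) :
    HasDerivAt (fun s => osc h (dot (y, s) η) * a ((y, s), η))
      ((h⁻¹ : ℂ) * (osc h (dot (y, s) η) * normalDerivSymbol a h ((y, s), η))) s := by
  have hdot : HasDerivAt (fun s => dot (y, s) η) η.2 s :=
    (((hasDerivAt_id s).mul_const η.2).const_add ⟪y, η.1⟫).congr_deriv (one_mul _)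
  have hosc : HasDerivAt (fun s => osc h (dot (y, s) η)) _ s :=
    (hasDerivAt_osc h _).scomp s hdot
  have hsymbol : HasDerivAt (fun s => a ((y, s), η)) (fderiv ℝ a ((y, s), η) ((0, 1), 0)) s :=
    (ha _).hasFDerivAt.comp_hasDerivAt s
      (((hasDerivAt_const s y).prodMk (hasDerivAt_id s)).prodMk (hasDerivAt_const s η))
  refine (hosc.mul hsymbol).congr_deriv ?_
  have : (h : ℂ) ≠ 0 := by exact_mod_cast hh
  simp only [normalDerivSymbol, Complex.ofReal_inv, Complex.real_smul]
  field_simp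

lemma hasDerivAt_OpS {a : V m × V m → ℂ} (ha : ContDiff ℝ 1 a) (hac : HasCompactSupport a)
    {v : V m → ℂ} (hv : Integrable v) (hh : h ≠ 0) (y : EuclideanSpace ℝ (Fin m)) (s : ℝ) :
    HasDerivAt (fun s => OpS m h a v (y, s))
      ((h⁻¹ : ℂ) * OpS m h (normalDerivSymbol a h) v (y, s)) s := by
  set a' := normalDerivSymbol a h
  have hacont := ha.continuous
  have ha' : Continuous a' :=
    (contDiff_normalDerivSymbol (n := 0) ha).continuous.comp (.prodMk_right h)
  have hac' : HasCompactSupport a' :=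
    hac.of_isClosed_subset (isClosed_tsupport _) (tsupport_normalDerivSymbol_subset a h)
  have hvhat := continuous_semiFourier h hv
  let f (s : ℝ) (η : V m) : ℂ := osc h (dot (y, s) η) * a ((y, s), η) * semiFourier h v η
  let f' (s : ℝ) (η : V m) : ℂ :=
    (h⁻¹ : ℂ) * (osc h (dot (y, s) η) * a' ((y, s), η)) * semiFourier h v η
  have hint := hasDerivAt_integral_of_compact_support (μ := volume) (f := f) (f' := f')
    (by fun_prop) (by fun_prop)
    (fun s η => (hasDerivAt_osc_mul_symbol (ha.differentiable one_ne_zero) hh y s η).mul_const _)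
    (hac.image continuous_snd)
    (fun s η hη => by
      simp only [f, image_eq_zero_of_notMem_tsupport fun h => hη ⟨((y, s), η), h, rfl⟩, mul_zero,
        zero_mul]) s
  simp only [OpS_eq_integral_semiFourier (integrable_slice_of_hasCompactSupport hacont hac _) hv,
    OpS_eq_integral_semiFourier (integrable_slice_of_hasCompactSupport ha' hac' _) hv]
  refine (hint.const_smul ((2 * Real.pi * h) ^ (m + 1))⁻¹).congr_deriv ?_
  simp only [f', mul_assoc]
  rw [integral_const_mul, mul_smul_comm]

lemma Xi0_OpS {a : V m × V m → ℂ} (ha : ContDiff ℝ 1 a) (hac : HasCompactSupport a)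
    {v : V m → ℂ} (hv : Integrable v) (hh : h ≠ 0) (y : V m) :
    Xi0 m (OpS m h a v) y =
      (h⁻¹ : ℂ) * ∫ t : unitInterval, OpS m h (normalDerivSymbol a h) v (dilate t y) := by
  simp only [Xi0, (hasDerivAt_OpS ha hac hv hh _ _).deriv]
  rw [intervalIntegral.integral_const_mul, intervalIntegral_zero_one_eq_integral_unitInterval]
  rfl

/-- The semiclassical kernel, up to a power of `2πh`, of `Op_h(b) ψ δ_t^* Op_h(c)`: this operator
sends `v` to `∫ dilationKernel h b ψ c t x η * semiFourier h v η dη`. The integration variable is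
`z = (y, ξ)`. -/
noncomputable def dilationKernel (h : ℝ) (b : V m × V m → ℂ) (ψ : V m → ℂ) (c : V m × V m → ℂ)
    (t : ℝ) (x η : V m) : ℂ :=
  ∫ z : V m × V m, osc h (dot (x - z.1) z.2 + dot z.1 (dilate t η)) *
    (b (x, z.2) * ψ z.1 * c (dilate t z.1, η))

lemma integral_OpS_dilate {c : V m × V m → ℂ} (hc : Continuous c) (hcc : HasCompactSupport c)
    {v : V m → ℂ} (hv : Integrable v) (y : V m) :
    ∫ t : unitInterval, OpS m h c v (dilate t y) = ((2 * Real.pi * h) ^ (m + 1))⁻¹ •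
      ∫ q : unitInterval × V m, osc h (dot (dilate q.1 y) q.2) * c (dilate q.1 y, q.2) *
        semiFourier h v q.2 := by
  have hvhat := continuous_semiFourier h hv
  have hdil := (contDiff_dilate (m := m) (n := 0)).continuous
  let G (q : unitInterval × V m) : ℂ :=
    osc h (dot (dilate q.1 y) q.2) * c (dilate q.1 y, q.2) * semiFourier h v q.2
  have hdily : Continuous fun q : unitInterval × V m => dilate q.1 y :=
    hdil.comp (f := fun q : unitInterval × V m => ((q.1 : ℝ), y)) (by fun_prop)
  have hG : Integrable G (volume.prod volume) := by
    refine Continuous.integrable_of_hasCompactSupport (by fun_prop)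
      (.intro (isCompact_univ.prod (hcc.image continuous_snd)) fun q hq => ?_)
    have hcq : c (dilate q.1 y, q.2) = 0 :=
      image_eq_zero_of_notMem_tsupport fun hmem => hq ⟨trivial, _, hmem, rfl⟩
    simp only [G, hcq, mul_zero, zero_mul]
  simp only [OpS_eq_integral_semiFourier (integrable_slice_of_hasCompactSupport hc hcc _) hv]
  rw [integral_smul]
  exact congrArg _ (integral_prod G hG).symm

lemma OpS_mul_integral_OpS_dilate {b c : V m × V m → ℂ} {ψ : V m → ℂ} (hb : Continuous b)
    (hbc : HasCompactSupport b) (hψ : Continuous ψ) (hψc : HasCompactSupport ψ) (hc : Continuous c)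
    (hcc : HasCompactSupport c) {v : V m → ℂ} (hv : Integrable v) (x : V m) :
    OpS m h b (fun y => ψ y * ∫ t : unitInterval, OpS m h c v (dilate t y)) x =
      (((2 * Real.pi * h) ^ (m + 1))⁻¹ ^ 2) •
        ∫ q : unitInterval × V m, dilationKernel h b ψ c q.1 x q.2 * semiFourier h v q.2 := by
  set r := ((2 * Real.pi * h) ^ (m + 1))⁻¹
  have hvhat := continuous_semiFourier h hv
  have hdil : Continuous fun p : (V m × V m) × (unitInterval × V m) => dilate p.2.1 p.1.1 :=
    (contDiff_dilate (m := m) (n := 0)).continuous.comp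
      (f := fun p : (V m × V m) × (unitInterval × V m) => ((p.2.1 : ℝ), p.1.1)) (by fun_prop)
  let F (z : V m × V m) (q : unitInterval × V m) : ℂ :=
    osc h (dot (x - z.1) z.2) * (b (x, z.2) * ψ z.1) *
      (osc h (dot (dilate q.1 z.1) q.2) * c (dilate q.1 z.1, q.2) * semiFourier h v q.2)
  have hF : Continuous (Function.uncurry F) := by
    unfold F Function.uncurry
    fun_prop
  have hFc : HasCompactSupport (Function.uncurry F) := by
    refine .intro ((hψc.isCompact.prod (hbc.image continuous_snd)).prod
      (isCompact_univ.prod (hcc.image continuous_snd))) fun p hp => ?_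
    contrapose! hp
    simp only [Function.uncurry, F, mul_ne_zero_iff] at hp
    exact ⟨⟨subset_tsupport _ hp.1.2.2, _, subset_tsupport _ hp.1.2.1, rfl⟩,
      trivial, _, subset_tsupport _ hp.2.1.2, rfl⟩
  calc OpS m h b (fun y => ψ y * ∫ t : unitInterval, OpS m h c v (dilate t y)) x
      = r • ∫ z, r • ∫ q, F z q := by
        simp only [integral_OpS_dilate hc hcc hv, F, integral_const_mul]
        refine congrArg _ (integral_congr_ae (.of_forall fun z => ?_))
        change osc h (dot (x - z.1) z.2) * b (x, z.2) * (ψ z.1 * r • _) = _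
        simp only [Complex.real_smul]
        ring
    _ = r ^ 2 • ∫ q, ∫ z, F z q := by
        rw [integral_smul, smul_smul, ← sq, integral_integral_swap_of_hasCompactSupport hF hFc]
    _ = _ := by
        simp only [dilationKernel, ← integral_mul_const, F, osc_add, dot_dilate_left]
        congr! 5
        ring

lemma dilationKernel_eq_zero {b c : V m × V m → ℂ} {ψ : V m → ℂ} {t : ℝ} {x η : V m}
    (hxη : ¬(x ∈ Prod.fst '' tsupport b ∧ η ∈ Prod.snd '' tsupport c)) :
    dilationKernel h b ψ c t x η = 0 := by
  refine integral_eq_zero_of_ae (.of_forall fun z => ?_)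
  contrapose! hxη
  obtain ⟨-, ⟨hb, -⟩, hc⟩ : _ ∧ (b (x, z.2) ≠ 0 ∧ ψ z.1 ≠ 0) ∧ c (dilate t z.1, η) ≠ 0 := by
    simpa only [Pi.zero_apply, mul_ne_zero_iff] using hxη
  exact ⟨⟨_, subset_tsupport _ hb, rfl⟩, _, subset_tsupport _ hc, rfl⟩

-- The supports are separated only for `t ∈ [0, 1]`; with `t = sin² s` the parameter `s` ranges over
-- a vector space.
lemma exists_norm_dilationKernel_sin_sq_le {b : V m × V m → ℂ} {ψ : V m → ℂ}
    (hb : ContDiff ℝ ∞ b) (hbc : HasCompactSupport b) (hψ : ContDiff ℝ ∞ ψ)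
    (hψc : HasCompactSupport ψ) {A : Set (V m × V m)} (hA : IsClosed A) {c : ℝ → V m × V m → ℂ}
    (hc : ContDiff ℝ ∞ (Function.uncurry c)) (hcA : ∀ κ, tsupport (c κ) ⊆ A)
    (hsep : ∀ (x ξ : V m), ∀ t ∈ Set.Icc (0 : ℝ) 1,
      (dilate t x, ξ) ∈ A → (x, dilate t ξ) ∉ tsupport b)
    {K : Set (V m × V m × ℝ × ℝ)} (hK : IsCompact K) (N : ℕ) :
    ∃ C : ℝ, 0 ≤ C ∧ ∀ h : ℝ, 0 < h → ∀ p ∈ K,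
      ‖dilationKernel h b ψ (c p.2.2.2) (Real.sin p.2.2.1 ^ 2) p.1 p.2.1‖ ≤ C * h ^ N := by
  have : (volume : Measure (V m)).IsAddHaarMeasure := isAddHaarMeasure_volume m
  have : (volume : Measure (V m × V m)).IsAddHaarMeasure := Measure.prod.instIsAddHaarMeasure _ _
  let T (q : (V m × V m × ℝ × ℝ) × V m × V m) : ℝ := Real.sin q.1.2.2.1 ^ 2
  let S : Set ((V m × V m × ℝ × ℝ) × V m × V m) := {q | (q.1.1, q.2.2) ∈ tsupport b ∧
    q.2.1 ∈ tsupport ψ ∧ (dilate (T q) q.2.1, q.1.2.1) ∈ A}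
  have hT : ContDiff ℝ ∞ T := by fun_prop
  have hTy : ContDiff ℝ ∞ fun q => dilate (T q) q.2.1 :=
    contDiff_dilate.comp (hT.prodMk (contDiff_fst.comp contDiff_snd))
  have hTη : ContDiff ℝ ∞ fun q => dilate (T q) q.1.2.1 :=
    contDiff_dilate.comp (hT.prodMk (by fun_prop))
  refine exists_norm_integral_osc_mul_le_pow volume (S := S)
    (Φ := fun p z => dot (p.1 - z.1) z.2 + dot z.1 (dilate (Real.sin p.2.2.1 ^ 2) p.2.1))
    (G := fun p z => b (p.1, z.2) * ψ z.1 *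
      c p.2.2.2 (dilate (Real.sin p.2.2.1 ^ 2) z.1, p.2.1))
    ?_ hK (hψc.prod (hbc.image continuous_snd)) ?_ ?_ N ?_ ?_
  · unfold Function.uncurry
    fun_prop
  · exact fun q hq => ⟨hq.2.1, _, hq.1, rfl⟩
  · rintro q ⟨hqb, -, hqA⟩
    refine fderiv_phase_ne_zero fun hcrit => ?_
    rw [Prod.ext_iff] at hcrit
    rw [hcrit.2] at hqb
    rw [hcrit.1] at hqA
    exact hsep _ _ _ ⟨sq_nonneg _, Real.sin_sq_le_one _⟩ hqA hqb
  · have hcq : ContDiff ℝ ∞ fun q : (V m × V m × ℝ × ℝ) × V m × V m =>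
        c q.1.2.2.2 (dilate (T q) q.2.1, q.1.2.1) :=
      hc.comp (contDiff_fst.snd.snd.snd.prodMk (hTy.prodMk (by fun_prop)))
    exact ((hb.comp (by fun_prop)).mul (hψ.comp (by fun_prop))).mul hcq
  · refine closure_minimal (fun q hq => ?_) ?_
    · simp only [Function.uncurry, Function.mem_support, mul_ne_zero_iff] at hq
      exact ⟨subset_tsupport _ hq.1.1, subset_tsupport _ hq.1.2, hcA _ (subset_tsupport _ hq.2)⟩
    · have hTy' := hTy.continuous
      exact ((isClosed_tsupport b).preimage (by fun_prop)).inter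
        (((isClosed_tsupport ψ).preimage (by fun_prop)).inter (hA.preimage (by fun_prop)))

lemma exists_norm_dilationKernel_le {b : V m × V m → ℂ} {ψ : V m → ℂ}
    (hb : ContDiff ℝ ∞ b) (hbc : HasCompactSupport b) (hψ : ContDiff ℝ ∞ ψ)
    (hψc : HasCompactSupport ψ) {A : Set (V m × V m)} (hA : IsCompact A) {c : ℝ → V m × V m → ℂ}
    (hc : ContDiff ℝ ∞ (Function.uncurry c)) (hcA : ∀ κ, tsupport (c κ) ⊆ A)
    (hsep : ∀ (x ξ : V m), ∀ t ∈ Set.Icc (0 : ℝ) 1,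
      (dilate t x, ξ) ∈ A → (x, dilate t ξ) ∉ tsupport b) (N : ℕ) :
    ∃ C : ℝ, 0 ≤ C ∧ ∀ h ∈ Set.Ioc (0 : ℝ) 1, ∀ t ∈ Set.Icc (0 : ℝ) 1, ∀ x η : V m,
      ‖dilationKernel h b ψ (c h) t x η‖ ≤ C * h ^ N := by
  obtain ⟨C, hC₀, hC⟩ := exists_norm_dilationKernel_sin_sq_le hb hbc hψ hψc hA.isClosed hc hcA hsep
    ((hbc.image continuous_fst).prod ((hA.image continuous_snd).prod
      ((isCompact_Icc (a := -(Real.pi / 2)) (b := Real.pi / 2)).prod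
        (isCompact_Icc (a := 0) (b := 1))))) N
  refine ⟨C, hC₀, fun h hh t ht x η => ?_⟩
  by_cases hxη : x ∈ Prod.fst '' tsupport b ∧ η ∈ Prod.snd '' tsupport (c h)
  · have hsin : Real.sin (Real.arcsin √t) ^ 2 = t := by
      rw [Real.sin_arcsin (by linarith [Real.sqrt_nonneg t]) (Real.sqrt_le_one.2 ht.2),
        Real.sq_sqrt ht.1]
    simpa only [hsin] using hC h hh.1 (x, η, Real.arcsin √t, h)
      ⟨hxη.1, Set.image_mono (hcA h) hxη.2, Real.arcsin_mem_Icc _, hh.1.le, hh.2⟩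
  · rw [dilationKernel_eq_zero hxη, norm_zero]
    have := hh.1
    positivity

lemma norm_integral_mul_semiFourier_le {κ : unitInterval × V m → ℂ} {L : Set (V m)}
    (hL : IsCompact L) {M : ℝ} (hκ : ∀ q, ‖κ q‖ ≤ M) (hκL : ∀ q, q.2 ∉ L → κ q = 0)
    (v : V m → ℂ) :
    ‖∫ q, κ q * semiFourier h v q.2‖ ≤ M * (∫ w, ‖v w‖) * volume.real L := by
  have hM : 0 ≤ M := (norm_nonneg _).trans (hκ 0)
  have hzero : ∀ q ∉ Set.univ ×ˢ L, κ q * semiFourier h v q.2 = 0 := fun q hq => by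
    rw [hκL q fun hqL => hq ⟨trivial, hqL⟩, zero_mul]
  have hvol : volume.real ((Set.univ : Set unitInterval) ×ˢ L) = volume.real L := by
    rw [Measure.volume_eq_prod, measureReal_prod_prod, probReal_univ, one_mul]
  rw [← setIntegral_eq_integral_of_forall_compl_eq_zero hzero, ← hvol]
  refine norm_setIntegral_le_of_norm_le_const (isCompact_univ.prod hL).measure_lt_top fun q _ => ?_
  rw [norm_mul]
  exact mul_le_mul (hκ q) (norm_semiFourier_le h v q.2) (norm_nonneg _) hM

lemma OpS_eq_zero_of_notMem_fst_tsupport {b : V m × V m → ℂ} {x : V m}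
    (hx : x ∉ Prod.fst '' tsupport b) (u : V m → ℂ) : OpS m h b u x = 0 := by
  have hb ξ : b (x, ξ) = 0 := image_eq_zero_of_notMem_tsupport fun hmem => hx ⟨_, hmem, rfl⟩
  simp only [OpS, hb, mul_zero, zero_mul, integral_zero, smul_zero]

lemma OpS_const_mul (b : V m × V m → ℂ) (k : ℂ) (u : V m → ℂ) (x : V m) :
    OpS m h b (fun y => k * u y) x = k * OpS m h b u x := by
  simp only [OpS, mul_left_comm _ k, integral_const_mul, mul_smul_comm]

lemma OpS_mul_Xi0_OpS_eq {a b : V m × V m → ℂ} {ψ : V m → ℂ} (ha : ContDiff ℝ 1 a)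
    (hac : HasCompactSupport a) (hb : Continuous b) (hbc : HasCompactSupport b)
    (hψ : Continuous ψ) (hψc : HasCompactSupport ψ) (hh : h ≠ 0) {v : V m → ℂ}
    (hv : Integrable v) (x : V m) :
    OpS m h b (fun y => ψ y * Xi0 m (OpS m h a v) y) x =
      (h⁻¹ : ℂ) * ((((2 * Real.pi * h) ^ (m + 1))⁻¹ ^ 2) • ∫ q : unitInterval × V m,
        dilationKernel h b ψ (normalDerivSymbol a h) q.1 x q.2 * semiFourier h v q.2) := by
  have hc : Continuous (normalDerivSymbol a h) :=
    (contDiff_normalDerivSymbol (n := 0) ha).continuous.comp (.prodMk_right h)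
  have hcc : HasCompactSupport (normalDerivSymbol a h) :=
    hac.of_isClosed_subset (isClosed_tsupport _) (tsupport_normalDerivSymbol_subset a h)
  rw [← OpS_mul_integral_OpS_dilate hb hbc hψ hψc hc hcc hv x, ← OpS_const_mul]
  simp only [Xi0_OpS ha hac hv hh, mul_left_comm]

theorem exists_norm_OpS_Xi0_OpS_le {a b : V m × V m → ℂ} {ψ : V m → ℂ} (ha : ContDiff ℝ ∞ a)
    (hac : HasCompactSupport a) (hb : ContDiff ℝ ∞ b) (hbc : HasCompactSupport b)
    (hψ : ContDiff ℝ ∞ ψ) (hψc : HasCompactSupport ψ)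
    (hsep : ∀ (x ξ : V m), ∀ t ∈ Set.Icc (0 : ℝ) 1,
      (dilate t x, ξ) ∈ tsupport a → (x, dilate t ξ) ∉ tsupport b) (N : ℕ) :
    ∃ D : ℝ, 0 ≤ D ∧ ∀ h ∈ Set.Ioc (0 : ℝ) 1, ∀ v : V m → ℂ, Integrable v → ∀ x,
      ‖OpS m h b (fun y => ψ y * Xi0 m (OpS m h a v) y) x‖ ≤ D * h ^ N * ∫ w, ‖v w‖ := by
  obtain ⟨C, hC₀, hC⟩ := exists_norm_dilationKernel_le hb hbc hψ hψc hac
    (contDiff_normalDerivSymbol (n := ∞) ha) (tsupport_normalDerivSymbol_subset a) hsep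
    (N + 1 + 2 * (m + 1))
  set L := Prod.snd '' tsupport a
  refine ⟨((2 * Real.pi) ^ (m + 1))⁻¹ ^ 2 * C * volume.real L, by positivity,
    fun h hh v hv x => ?_⟩
  have hh₀ : 0 < h := hh.1
  set r := ((2 * Real.pi * h) ^ (m + 1))⁻¹ with hr
  have hkernel := norm_integral_mul_semiFourier_le (h := h) (hac.image continuous_snd)
    (fun q : unitInterval × V m => hC h hh q.1 q.1.2 x q.2)
    (fun q hq => dilationKernel_eq_zero fun hxη =>
      hq (Set.image_mono (tsupport_normalDerivSymbol_subset a h) hxη.2)) v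
  calc ‖OpS m h b (fun y => ψ y * Xi0 m (OpS m h a v) y) x‖
      = h⁻¹ * (r ^ 2 * ‖∫ q : unitInterval × V m,
          dilationKernel h b ψ (normalDerivSymbol a h) q.1 x q.2 * semiFourier h v q.2‖) := by
        rw [OpS_mul_Xi0_OpS_eq (ha.of_le (by simp)) hac hb.continuous hbc hψ.continuous hψc
          hh₀.ne' hv, norm_mul, norm_smul, norm_inv, Complex.norm_real,
          Real.norm_of_nonneg hh₀.le, Real.norm_of_nonneg (by positivity)]
    _ ≤ h⁻¹ * (r ^ 2 * (C * h ^ (N + 1 + 2 * (m + 1)) * (∫ w, ‖v w‖) * volume.real L)) := by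
        gcongr
    _ = _ := by
        have hpow : h ^ (N + 1 + 2 * (m + 1)) = h ^ N * h * (h ^ (m + 1)) ^ 2 := by ring
        rw [hr, hpow, mul_pow _ h]
        field_simp

theorem exists_eLpNorm_OpS_Xi0_OpS_le {a b : V m × V m → ℂ} {ψ : V m → ℂ} (ha : ContDiff ℝ ∞ a)
    (hac : HasCompactSupport a) (hb : ContDiff ℝ ∞ b) (hbc : HasCompactSupport b)
    (hψ : ContDiff ℝ ∞ ψ) (hψc : HasCompactSupport ψ)
    (hsep : ∀ (x ξ : V m), ∀ t ∈ Set.Icc (0 : ℝ) 1,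
      (dilate t x, ξ) ∈ tsupport a → (x, dilate t ξ) ∉ tsupport b) (p : ENNReal) (N : ℕ) :
    ∃ D : ℝ, 0 ≤ D ∧ ∀ h ∈ Set.Ioc (0 : ℝ) 1, ∀ v : V m → ℂ, Integrable v →
      eLpNorm (OpS m h b fun y => ψ y * Xi0 m (OpS m h a v) y) p volume ≤
        ENNReal.ofReal (D * h ^ N) * eLpNorm v 1 volume := by
  obtain ⟨D, hD₀, hD⟩ := exists_norm_OpS_Xi0_OpS_le ha hac hb hbc hψ hψc hsep N
  have hK : IsCompact (Prod.fst '' tsupport b) := hbc.image continuous_fst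
  set K := Prod.fst '' tsupport b
  have hKfin : volume K ^ p.toReal⁻¹ ≠ ⊤ :=
    ENNReal.rpow_ne_top_of_nonneg (by positivity) hK.measure_lt_top.ne
  set κ := (volume K ^ p.toReal⁻¹).toReal
  refine ⟨κ * D, by positivity, fun h hh v hv => ?_⟩
  have hh₀ := hh.1
  set f := OpS m h b fun y => ψ y * Xi0 m (OpS m h a v) y
  have hsupp : f.support ⊆ K := fun x hx => by
    contrapose! hx
    exact Function.notMem_support.2 (OpS_eq_zero_of_notMem_fst_tsupport hx _)
  have hbound := eLpNorm_le_of_ae_bound (p := p) (μ := volume.restrict K) (f := f)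
    (.of_forall (hD h hh v hv))
  rw [Measure.restrict_apply_univ, eLpNorm_restrict_eq_of_support_subset hsupp,
    ← ENNReal.ofReal_toReal hKfin] at hbound
  calc eLpNorm f p volume
      ≤ ENNReal.ofReal κ * ENNReal.ofReal (D * h ^ N * ∫ w, ‖v w‖) := hbound
    _ = ENNReal.ofReal (κ * D * h ^ N) * ENNReal.ofReal (∫ w, ‖v w‖) := by
        rw [← ENNReal.ofReal_mul (by positivity), ← ENNReal.ofReal_mul (by positivity)]
        ring_nf
    _ = _ := by rw [ofReal_integral_norm_eq_lintegral_enorm hv, eLpNorm_one_eq_lintegral_enorm]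

end Quantization

end Semiclassical

theorem stmt_15_general (m : ℕ) (a b : V m × V m → ℂ) (ψ χ : V m → ℂ)
    (ha : ContDiff ℝ (⊤ : ℕ∞) a) (hac : HasCompactSupport a)
    (hb : ContDiff ℝ (⊤ : ℕ∞) b) (hbc : HasCompactSupport b)
    (hψ : ContDiff ℝ (⊤ : ℕ∞) ψ) (hψc : HasCompactSupport ψ) (hχ : MemLp χ 2 volume)
    (hsupp : ∀ (x ξ : V m) (t : ℝ), t ∈ Set.Icc (0 : ℝ) 1 →
      (((x.1, t * x.2) : V m), ξ) ∈ tsupport a → (x, ((ξ.1, t * ξ.2) : V m)) ∉ tsupport b)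
    (N : ℕ) :
    ∃ C > 0, ∀ h : ℝ, 0 < h → h ≤ 1 → ∀ u : V m → ℂ, MemLp u 2 volume →
      eLpNorm (OpS m h b (fun y : V m =>
          ψ y * Xi0 m (OpS m h a (fun w : V m => χ w * u w)) y)) 2 volume ≤
        ENNReal.ofReal (C * h ^ N) * eLpNorm u 2 volume := by
  obtain ⟨D, hD₀, hD⟩ :=
    Semiclassical.exists_eLpNorm_OpS_Xi0_OpS_le ha hac hb hbc hψ hψc hsupp 2 N
  refine ⟨D * (eLpNorm χ 2 volume).toReal + 1, by positivity, fun h hh hh1 u hu => ?_⟩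
  have hχu : Integrable (fun w => χ w * u w) := hχ.integrable_mul hu
  refine (hD h ⟨hh, hh1⟩ _ hχu).trans ?_
  calc ENNReal.ofReal (D * h ^ N) * eLpNorm (fun w => χ w * u w) 1 volume
      ≤ ENNReal.ofReal (D * h ^ N) * (eLpNorm χ 2 volume * eLpNorm u 2 volume) := by
        gcongr
        exact eLpNorm_smul_le_mul_eLpNorm (φ := χ) (p := 2) (q := 2) hu.1 hχ.1
    _ = ENNReal.ofReal (D * (eLpNorm χ 2 volume).toReal * h ^ N) * eLpNorm u 2 volume := by
        rw [mul_right_comm D, ENNReal.ofReal_mul (p := D * h ^ N) (by positivity),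
          ENNReal.ofReal_toReal hχ.2.ne, mul_assoc]
    _ ≤ _ := by
        gcongr
        linarith

/-- under the support separation condition between `a` and `b`, the operator
`Op_h(b) ψ Ξ₀ Op_h(a) ψ` is `O(h^N)` on `L²` for every `N`. -/
theorem stmt_15 (m : ℕ) (a b : V m × V m → ℂ) (ψ : V m → ℂ)
    (ha : ContDiff ℝ (⊤ : ℕ∞) a) (hac : HasCompactSupport a)
    (hb : ContDiff ℝ (⊤ : ℕ∞) b) (hbc : HasCompactSupport b)
    (hψ : ContDiff ℝ (⊤ : ℕ∞) ψ) (hψc : HasCompactSupport ψ)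
    (hsupp : ∀ (x ξ : V m) (t : ℝ), t ∈ Set.Icc (0:ℝ) 1 →
      (((x.1, t * x.2) : V m), ξ) ∈ tsupport a → (x, ((ξ.1, t * ξ.2) : V m)) ∉ tsupport b) :
    ∀ N : ℕ, ∃ C > 0, ∀ h : ℝ, 0 < h → h ≤ 1 → ∀ u : SchwartzMap (V m) ℂ,
      eLpNorm (OpS m h b (fun y : V m =>
          ψ y * Xi0 m (OpS m h a (fun w : V m => ψ w * u w)) y)) 2 volume ≤
        ENNReal.ofReal (C * h ^ N) * eLpNorm (⇑u) 2 volume := fun N =>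
  have : (volume : Measure (V m)).IsAddHaarMeasure := Semiclassical.isAddHaarMeasure_volume m
  (stmt_15_general m a b ψ ψ ha hac hb hbc hψ hψc (hψ.continuous.memLp_of_hasCompactSupport hψc)
    hsupp N).imp fun _ hC => ⟨hC.1, fun h hh hh1 u => hC.2 h hh hh1 u (u.memLp 2 volume)⟩
end
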